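/- arXiv:2506.19745 — 6 statements merged into one kernel-verified Lean document; each statement's English description precedes it below -/
import Mathlib

section
/- Let G be a finite group and H a subgroup of G. Let x_1, ..., x_k be a complete set of representatives of the conjugacy classes of G consisting of elements of prime order. If the sum over i = 1, ..., k of |x_i^G| * (|x_i^G ∩ H| / |x_i^G|)^2 is strictly less than 1 (as a real number), then there exists g ∈ G such that H ∩ gHg⁻¹ is the trivial subgroup. -/
/-!
Let `G` act on a finite set `Ω` with no regular orbit. A nontrivial point stabilizer contains an
element of prime order, so the fixed-point sets of the elements of prime order cover `Ω`, and the
union bound gives `∑ |x_i^G| * fpr(x_i) ≥ 1`, where `fpr(g)` is the proportion of points fixed by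
`g`. On `G ⧸ H`, double counting the pairs `(y, ω)` with `y ∈ x^G` and `y • ω = ω` yields
`fpr(x) = |x^G ∩ H| / |x^G|`. Fixed-point ratios multiply over products of actions, and the
stabilizers of points of `∏ j, G ⧸ H j` are the intersections of conjugates of the `H j`; the case
of two copies of `H` is the theorem.
-/

open MulAction

section Group

variable {G : Type*} [Group G]

theorem exists_mem_prime_orderOf_of_ne_bot [Finite G] {K : Subgroup G} (hK : K ≠ ⊥) :
    ∃ g ∈ K, (orderOf g).Prime := by
  obtain ⟨p, hp, hdvd⟩ := Nat.exists_prime_and_dvd fun h ↦ hK (Subgroup.card_eq_one.1 h)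
  have := Fact.mk hp
  obtain ⟨g, hg⟩ := exists_prime_orderOf_dvd_card' p hdvd
  exact ⟨g, g.2, by rwa [Subgroup.orderOf_coe, hg]⟩

theorem ncard_conjugatesOf_inter_map_conj (a g : G) (H : Subgroup G) :
    (conjugatesOf a ∩ H.map (MulAut.conj g).toMonoidHom).ncard = (conjugatesOf a ∩ H).ncard := by
  have himage : conjugatesOf a ∩ H.map (MulAut.conj g).toMonoidHom =
      MulAut.conj g '' (conjugatesOf a ∩ H) := by
    ext y
    constructor
    · rintro ⟨hay, h, hH, rfl⟩
      exact ⟨h, ⟨hay.trans (isConj_iff.2 ⟨g, rfl⟩).symm, hH⟩, rfl⟩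
    · rintro ⟨h, ⟨hah, hH⟩, rfl⟩
      exact ⟨hah.trans (isConj_iff.2 ⟨g, rfl⟩), h, hH, rfl⟩
  rw [himage, Set.ncard_image_of_injective _ (MulAut.conj g).injective]

theorem inf_map_conj_inv_mul_eq_bot {H K : Subgroup G} {a b : G}
    (h : H.map (MulAut.conj a).toMonoidHom ⊓ K.map (MulAut.conj b).toMonoidHom = ⊥) :
    H ⊓ K.map (MulAut.conj (a⁻¹ * b)).toMonoidHom = ⊥ := by
  have hcomp : (MulAut.conj a).toMonoidHom.comp (MulAut.conj (a⁻¹ * b)).toMonoidHom =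
      (MulAut.conj b).toMonoidHom := by
    ext y
    simp [mul_assoc]
  have hinj : Function.Injective (MulAut.conj a).toMonoidHom := (MulAut.conj a).injective
  rwa [← Subgroup.map_eq_bot_iff_of_injective _ hinj, Subgroup.map_inf _ _ _ hinj,
    Subgroup.map_map, hcomp]

end Group

section FixedPoints

variable {G : Type*} [Group G]

theorem ncard_fixedBy_eq_of_isConj (Ω : Type*) [MulAction G Ω] {a b : G} (h : IsConj a b) :
    (fixedBy Ω b).ncard = (fixedBy Ω a).ncard := by
  obtain ⟨c, rfl⟩ := isConj_iff.1 h
  open Pointwise in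
  rw [← smul_fixedBy, Set.ncard_smul_set]

theorem ncard_biUnion_conjugatesOf_fixedBy_le [Finite G] (Ω : Type*) [MulAction G Ω] (a : G) :
    (⋃ y ∈ conjugatesOf a, fixedBy Ω y).ncard ≤
      (conjugatesOf a).ncard * (fixedBy Ω a).ncard := by
  have hfin := (conjugatesOf a).toFinite
  calc (⋃ y ∈ conjugatesOf a, fixedBy Ω y).ncard
    _ ≤ ∑ᶠ y ∈ conjugatesOf a, (fixedBy Ω y).ncard := hfin.ncard_biUnion_le _
    _ = ∑ᶠ _ ∈ conjugatesOf a, (fixedBy Ω a).ncard :=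
      finsum_mem_congr rfl fun _ hy ↦ ncard_fixedBy_eq_of_isConj Ω hy
    _ = (conjugatesOf a).ncard * (fixedBy Ω a).ncard := by
      rw [finsum_mem_eq_finite_toFinset_sum _ hfin, Finset.sum_const, smul_eq_mul,
        Set.ncard_eq_toFinset_card _ hfin]

theorem card_le_sum_ncard_fixedBy_of_stabilizer_ne_bot [Finite G] {Ω : Type*} [MulAction G Ω]
    {ι : Type*} [Fintype ι] {x : ι → G}
    (hx : ∀ g : G, (orderOf g).Prime → ∃ i, IsConj (x i) g)
    (hΩ : ∀ ω : Ω, stabilizer G ω ≠ ⊥) :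
    Nat.card Ω ≤ ∑ i, (conjugatesOf (x i)).ncard * (fixedBy Ω (x i)).ncard := by
  have hcover : (⋃ i, ⋃ y ∈ conjugatesOf (x i), fixedBy Ω y) = Set.univ := by
    refine Set.eq_univ_of_forall fun ω ↦ ?_
    obtain ⟨g, hg, hprime⟩ := exists_mem_prime_orderOf_of_ne_bot (hΩ ω)
    obtain ⟨i, hi⟩ := hx g hprime
    exact Set.mem_iUnion.2 ⟨i, Set.mem_biUnion hi hg⟩
  rw [← Set.ncard_univ, ← hcover]
  exact (Set.ncard_iUnion_le_of_fintype _).trans <|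
    Finset.sum_le_sum fun i _ ↦ ncard_biUnion_conjugatesOf_fixedBy_le Ω (x i)

theorem ncard_conjugatesOf_mul_ncard_fixedBy [Finite G] {Ω : Type*} [Finite Ω] [MulAction G Ω]
    [IsPretransitive G Ω] (a : G) (ω : Ω) :
    (conjugatesOf a).ncard * (fixedBy Ω a).ncard =
      Nat.card Ω * (conjugatesOf a ∩ stabilizer G ω).ncard := by
  classical
  have := Fintype.ofFinite G
  have := Fintype.ofFinite Ω
  have hfixed (y : G) (hy : y ∈ (conjugatesOf a).toFinset) :
      (Finset.univ.bipartiteAbove (fun (y : G) (ω : Ω) ↦ y • ω = ω) y).card =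
        (fixedBy Ω a).ncard := by
    have hconj : y ∈ conjugatesOf a := Set.mem_toFinset.1 hy
    rw [← ncard_fixedBy_eq_of_isConj Ω hconj, ← Set.ncard_coe_finset]
    congr 1
    ext
    simp
  have hstab (ω' : Ω) :
      ((conjugatesOf a).toFinset.bipartiteBelow (fun (y : G) (ω : Ω) ↦ y • ω = ω) ω').card =
        (conjugatesOf a ∩ stabilizer G ω).ncard := by
    obtain ⟨g, rfl⟩ := exists_smul_eq G ω ω'
    rw [← ncard_conjugatesOf_inter_map_conj a g, ← stabilizer_smul_eq_stabilizer_map_conj,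
      ← Set.ncard_coe_finset]
    congr 1
    ext
    simp
  rw [Set.ncard_eq_toFinset_card', Nat.card_eq_fintype_card, ← Finset.card_univ]
  exact Finset.card_mul_eq_card_mul _ hfixed fun ω' _ ↦ hstab ω'

theorem fixedBy_pi {κ : Type*} (Ω : κ → Type*) [∀ j, MulAction G (Ω j)] (g : G) :
    fixedBy (∀ j, Ω j) g = Set.univ.pi fun j ↦ fixedBy (Ω j) g := by
  ext ω
  simp [funext_iff]

theorem stabilizer_pi {κ : Type*} {Ω : κ → Type*} [∀ j, MulAction G (Ω j)] (ω : ∀ j, Ω j) :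
    stabilizer G ω = ⨅ j, stabilizer G (ω j) := by
  ext g
  simp [Subgroup.mem_iInf, funext_iff]

theorem stabilizer_quotient_mk (H : Subgroup G) (g : G) :
    stabilizer G (g : G ⧸ H) = H.map (MulAut.conj g).toMonoidHom := by
  have hg : (g : G ⧸ H) = g • ((1 : G) : G ⧸ H) := by
    rw [Quotient.smul_coe, smul_eq_mul, mul_one]
  rw [hg, stabilizer_smul_eq_stabilizer_map_conj, stabilizer_quotient]

end FixedPoints

section FixedPointRatio

variable {G : Type*} [Group G]

/-- The fixed-point ratio of `g` on `Ω`: the proportion of the points of a finite `G`-set `Ω` that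
are fixed by `g`. It is `0` for empty or infinite `Ω`. -/
noncomputable def fixedPointRatio (Ω : Type*) [MulAction G Ω] (g : G) : ℝ :=
  (fixedBy Ω g).ncard / Nat.card Ω

theorem fixedPointRatio_pi {κ : Type*} [Fintype κ] (Ω : κ → Type*) [∀ j, MulAction G (Ω j)]
    (g : G) : fixedPointRatio (∀ j, Ω j) g = ∏ j, fixedPointRatio (Ω j) g := by
  have hcard : (fixedBy (∀ j, Ω j) g).ncard = ∏ j, (fixedBy (Ω j) g).ncard := by
    rw [fixedBy_pi, ← Nat.card_coe_set_eq, Nat.card_congr (Equiv.Set.univPi _), Nat.card_pi]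
    rfl
  simp only [fixedPointRatio, hcard, Nat.card_pi, Nat.cast_prod, Finset.prod_div_distrib]

theorem fixedPointRatio_eq_div [Finite G] {Ω : Type*} [Finite Ω] [MulAction G Ω]
    [IsPretransitive G Ω] (a : G) (ω : Ω) :
    fixedPointRatio Ω a =
      (conjugatesOf a ∩ stabilizer G ω).ncard / (conjugatesOf a).ncard := by
  have hΩ : (Nat.card Ω : ℝ) ≠ 0 := Nat.cast_ne_zero.2 (Nat.card_ne_zero.2 ⟨⟨ω⟩, ‹_›⟩)
  have ha : ((conjugatesOf a).ncard : ℝ) ≠ 0 :=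
    Nat.cast_ne_zero.2 (Set.ncard_ne_zero_of_mem mem_conjugatesOf_self)
  rw [fixedPointRatio, div_eq_div_iff hΩ ha, mul_comm, mul_comm _ (Nat.card Ω : ℝ)]
  exact_mod_cast ncard_conjugatesOf_mul_ncard_fixedBy a ω

theorem fixedPointRatio_quotient [Finite G] (H : Subgroup G) (a : G) :
    fixedPointRatio (G ⧸ H) a = (conjugatesOf a ∩ H).ncard / (conjugatesOf a).ncard := by
  rw [fixedPointRatio_eq_div a ((1 : G) : G ⧸ H), stabilizer_quotient]

theorem exists_stabilizer_eq_bot_of_sum_fixedPointRatio_lt_one [Finite G] {Ω : Type*} [Finite Ω]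
    [Nonempty Ω] [MulAction G Ω] {ι : Type*} [Fintype ι] {x : ι → G}
    (hx : ∀ g : G, (orderOf g).Prime → ∃ i, IsConj (x i) g)
    (hsum : ∑ i, (conjugatesOf (x i)).ncard * fixedPointRatio Ω (x i) < 1) :
    ∃ ω : Ω, stabilizer G ω = ⊥ := by
  by_contra! hΩ
  have hpos : (0 : ℝ) < Nat.card Ω := Nat.cast_pos.2 Nat.card_pos
  refine hsum.not_ge ?_
  simp only [fixedPointRatio, ← mul_div_assoc, ← Finset.sum_div]
  rw [one_le_div hpos]
  exact_mod_cast card_le_sum_ncard_fixedBy_of_stabilizer_ne_bot hx hΩ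

end FixedPointRatio

theorem stmt0_general {G : Type*} [Group G] [Finite G] {κ : Type*} [Fintype κ]
    (H : κ → Subgroup G) {ι : Type*} [Fintype ι] (x : ι → G)
    (hcomplete : ∀ g : G, (orderOf g).Prime → ∃ i, IsConj (x i) g)
    (hsum : ∑ i, ((conjugatesOf (x i)).ncard : ℝ) *
      ∏ j, ((conjugatesOf (x i) ∩ H j).ncard / (conjugatesOf (x i)).ncard : ℝ) < 1) :
    ∃ g : κ → G, ⨅ j, (H j).map (MulAut.conj (g j)).toMonoidHom = ⊥ := by
  simp only [← fixedPointRatio_quotient, ← fixedPointRatio_pi] at hsum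
  obtain ⟨ω, hω⟩ := exists_stabilizer_eq_bot_of_sum_fixedPointRatio_lt_one hcomplete hsum
  choose g hg using fun j ↦ QuotientGroup.mk_surjective (ω j)
  refine ⟨g, ?_⟩
  simpa only [stabilizer_pi, ← hg, stabilizer_quotient_mk] using hω

/-- If `x 0, ..., x (k-1)` is a complete set of representatives of the conjugacy
classes of the finite group `G` consisting of elements of prime order, and
`∑ i, |x_i^G| * (|x_i^G ∩ H| / |x_i^G|)^2 < 1`, then some conjugate of `H`
intersects `H` trivially. -/
theorem stmt0 {G : Type*} [Group G] [Finite G] (H : Subgroup G) (k : ℕ) (x : Fin k → G)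
    (hord : ∀ i, (orderOf (x i)).Prime)
    (hdist : ∀ i j, IsConj (x i) (x j) → i = j)
    (hcomplete : ∀ g : G, (orderOf g).Prime → ∃ i, IsConj (x i) g)
    (hsum : ∑ i : Fin k, (Nat.card {y : G // IsConj (x i) y} : ℝ) *
        ((Nat.card {y : G // IsConj (x i) y ∧ y ∈ H} : ℝ) /
          (Nat.card {y : G // IsConj (x i) y} : ℝ)) ^ 2 < 1) :
    ∃ g : G, H ⊓ H.map (MulAut.conj g).toMonoidHom = ⊥ := by
  obtain ⟨g, hg⟩ := stmt0_general (fun _ : Bool ↦ H) x hcomplete (by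
    simpa only [← Nat.card_coe_set_eq, Finset.prod_const, Finset.card_univ, Fintype.card_bool])
  exact ⟨(g true)⁻¹ * g false, inf_map_conj_inv_mul_eq_bot (by rwa [iInf_bool_eq] at hg)⟩
end

section
/- Let q be an odd prime power, let F_q be a finite field with q elements, and let m ≥ 1. Then the order of a Sylow 2-subgroup of the symplectic group Sp_{2m}(F_q) (equivalently, the largest power of 2 dividing |Sp_{2m}(F_q)|) equals ((q^2 − 1)_2)^m * (m!)_2. -/
/-- `twoPart m` is the largest power of `2` dividing `m`, i.e. `2 ^ ν₂(m)`. -/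
def twoPart (m : ℕ) : ℕ := 2 ^ (m.factorization 2)

/-!
The rows of a symplectic matrix form a symplectic basis of `F ^ (2m)`, so `|Sp_{2m}(q)|` is the
number of symplectic bases. The first pair `(e, f)` of such a basis is any pair with `⟨e, f⟩ = 1`,
which gives `(q ^ 2m - 1) q ^ (2m - 1)` choices, and the other pairs form a symplectic basis of the
orthogonal complement of `e` and `f`. Hence `|Sp_{2m}(q)| = q ^ m² ∏_{i ≤ m} (q ^ 2i - 1)`. If a
prime `p` divides `q ^ 2 - 1`, then it does not divide `q`, and lifting the exponent gives
`(q ^ 2i - 1)_p = (q ^ 2 - 1)_p (i)_p`; for `p = 2` this works because the exponents are even.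
-/

open Module LinearMap Matrix
open LinearMap (BilinForm)
open scoped Nat

section Counting

variable {F V : Type*} [Field F] [AddCommGroup V] [Module F V]

theorem natCard_dual_fiber [Module.Finite F V] {f : Dual F V} (hf : f ≠ 0) (a : F) :
    Nat.card {v // f v = a} = Nat.card F ^ (finrank F V - 1) := by
  have e : {v // f v = a} ≃ ker f :=
    AddMonoidHom.fiberEquivKerOfSurjective (f := f.toAddMonoidHom) (LinearMap.surjective hf) a
  rw [Nat.card_congr e, natCard_eq_pow_finrank (K := F), ← f.finrank_ker_add_one_of_ne_zero hf,
    Nat.add_sub_cancel]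

theorem natCard_pairs_apply_eq_one [Finite F] [Module.Finite F V] {B : BilinForm F V}
    (hB : B.Nondegenerate) :
    Nat.card {h : V × V // B h.1 h.2 = 1} =
      (Nat.card F ^ finrank F V - 1) * Nat.card F ^ (finrank F V - 1) := by
  classical
  have : Finite V := Module.finite_of_finite F
  have := Fintype.ofFinite V
  have hfiber (x : V) : Nat.card {y // B x y = 1} =
      if x ≠ 0 then Nat.card F ^ (finrank F V - 1) else 0 := by
    split_ifs with hx
    · exact natCard_dual_fiber (fun h ↦ hx (hB.1 x (LinearMap.congr_fun h))) 1
    · simp [not_not.1 hx]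
  have hne : (Finset.univ.filter fun x : V ↦ x ≠ 0).card = Nat.card F ^ finrank F V - 1 := by
    rw [Finset.filter_ne', Finset.card_erase_of_mem (Finset.mem_univ _), Finset.card_univ,
      ← Nat.card_eq_fintype_card, natCard_eq_pow_finrank (K := F)]
  rw [Nat.card_congr (Equiv.subtypeProdEquivSigmaSubtype fun x y ↦ B x y = 1), Nat.card_sigma,
    Finset.sum_congr rfl fun x _ ↦ hfiber x, ← Finset.sum_filter, Finset.sum_const, hne,
    smul_eq_mul]

end Counting

section HyperbolicPlane

variable {F V : Type*} [Field F] [AddCommGroup V] [Module F V] {B : BilinForm F V}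

theorem nondegenerate_restrict_orthogonal [Module.Finite F V] (hB : B.Nondegenerate)
    (hrefl : B.IsRefl) {W : Submodule F V} (hW : Disjoint W (B.orthogonal W)) :
    (B.restrict (B.orthogonal W)).Nondegenerate := by
  refine B.nondegenerate_restrict_of_disjoint_orthogonal hrefl ?_
  rw [BilinForm.orthogonal_orthogonal hB hrefl]
  exact hW.symm

/-- The orthogonal complement of a pair of vectors, i.e. of the plane they span if they are linearly
independent. -/
def pairOrthogonal (B : BilinForm F V) (h : V × V) : Submodule F V :=
  B.orthogonal (Submodule.span F {h.1, h.2})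

theorem mem_pairOrthogonal {h : V × V} {v : V} :
    v ∈ pairOrthogonal B h ↔ B h.1 v = 0 ∧ B h.2 v = 0 := by
  refine ⟨fun hv ↦ ⟨hv h.1 (Submodule.mem_span_of_mem (by simp)),
    hv h.2 (Submodule.mem_span_of_mem (by simp))⟩, fun ⟨h₁, h₂⟩ n hn ↦ ?_⟩
  obtain ⟨a, b, rfl⟩ := Submodule.mem_span_pair.1 hn
  simp [h₁, h₂]

variable {h : V × V} (hB : B.IsAlt) (hh : B h.1 h.2 = 1)
include hB hh

theorem eq_zero_of_smul_add_smul_mem_pairOrthogonal {a b : F}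
    (hab : a • h.1 + b • h.2 ∈ pairOrthogonal B h) : a = 0 ∧ b = 0 := by
  have hh' : B h.2 h.1 = -1 := by rw [← hB.neg_eq, hh]
  obtain ⟨h₁, h₂⟩ := mem_pairOrthogonal.1 hab
  exact ⟨by simpa [hB.self_eq_zero, hh'] using h₂, by simpa [hB.self_eq_zero, hh] using h₁⟩

theorem finrank_span_pair_eq_two : finrank F (Submodule.span F {h.1, h.2}) = 2 := by
  have hli : LinearIndependent F ![h.1, h.2] := LinearIndependent.pair_iff.2 fun a b hab ↦
    eq_zero_of_smul_add_smul_mem_pairOrthogonal hB hh (hab ▸ zero_mem _)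
  rw [← range_cons_cons_empty h.1 h.2 ![], finrank_span_eq_card hli, Fintype.card_fin]

theorem disjoint_span_pair_pairOrthogonal :
    Disjoint (Submodule.span F {h.1, h.2}) (pairOrthogonal B h) := by
  rw [Submodule.disjoint_def]
  intro v hv hv'
  obtain ⟨a, b, rfl⟩ := Submodule.mem_span_pair.1 hv
  obtain ⟨rfl, rfl⟩ := eq_zero_of_smul_add_smul_mem_pairOrthogonal hB hh hv'
  simp

variable [Module.Finite F V] (hB' : B.Nondegenerate)
include hB'

theorem nondegenerate_restrict_pairOrthogonal : (B.restrict (pairOrthogonal B h)).Nondegenerate :=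
  nondegenerate_restrict_orthogonal hB' hB.isRefl (disjoint_span_pair_pairOrthogonal hB hh)

theorem finrank_pairOrthogonal_add_two : finrank F (pairOrthogonal B h) + 2 = finrank F V := by
  have hspan := finrank_span_pair_eq_two hB hh
  rw [pairOrthogonal, BilinForm.finrank_orthogonal hB', hspan, Nat.sub_add_cancel]
  exact hspan ▸ Submodule.finrank_le _

end HyperbolicPlane

section SymplecticFamily

variable {F V ι : Type*} [Field F] [AddCommGroup V] [Module F V]

/-- A family of pairs `(eᵢ, fᵢ)` with `B eᵢ eⱼ = B fᵢ fⱼ = 0` and `B eᵢ fⱼ = δᵢⱼ`. When `B` is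
alternating and there are `dim V / 2` pairs, their vectors form a symplectic basis of `V`. -/
structure IsSymplecticFamily (B : BilinForm F V) (p : ι → V × V) : Prop where
  fst_fst (i j : ι) : B (p i).1 (p j).1 = 0
  snd_snd (i j : ι) : B (p i).2 (p j).2 = 0
  fst_snd_self (i : ι) : B (p i).1 (p i).2 = 1
  fst_snd_of_ne {i j : ι} (hij : i ≠ j) : B (p i).1 (p j).2 = 0

variable {B : BilinForm F V}

theorem isSymplecticFamily_comp_equiv {κ : Type*} (e : κ ≃ ι) {p : ι → V × V} :
    IsSymplecticFamily B (p ∘ e) ↔ IsSymplecticFamily B p where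
  mp h :=
    { fst_fst i j := by simpa using h.fst_fst (e.symm i) (e.symm j)
      snd_snd i j := by simpa using h.snd_snd (e.symm i) (e.symm j)
      fst_snd_self i := by simpa using h.fst_snd_self (e.symm i)
      fst_snd_of_ne hij := by simpa using h.fst_snd_of_ne (e.symm.injective.ne hij) }
  mpr h :=
    { fst_fst i j := h.fst_fst (e i) (e j)
      snd_snd i j := h.snd_snd (e i) (e j)
      fst_snd_self i := h.fst_snd_self (e i)
      fst_snd_of_ne hij := h.fst_snd_of_ne (e.injective.ne hij) }

theorem isSymplecticFamily_option_iff (hB : B.IsAlt) {p : Option ι → V × V} :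
    IsSymplecticFamily B p ↔ B (p none).1 (p none).2 = 1 ∧
      (∀ i, (p (some i)).1 ∈ pairOrthogonal B (p none) ∧
        (p (some i)).2 ∈ pairOrthogonal B (p none)) ∧
      IsSymplecticFamily B (p ∘ some) := by
  simp only [mem_pairOrthogonal]
  constructor
  · intro h
    exact ⟨h.fst_snd_self none, fun i ↦
      ⟨⟨h.fst_fst _ _, hB.isRefl _ _ (h.fst_snd_of_ne (Option.some_ne_none i))⟩,
        h.fst_snd_of_ne (Option.some_ne_none i).symm, h.snd_snd _ _⟩,
      { fst_fst _ _ := h.fst_fst _ _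
        snd_snd _ _ := h.snd_snd _ _
        fst_snd_self _ := h.fst_snd_self _
        fst_snd_of_ne hij := h.fst_snd_of_ne ((Option.some_injective ι).ne hij) }⟩
  · rintro ⟨hnone, hperp, hsome⟩
    constructor
    · rintro (_ | i) (_ | j)
      exacts [hB.self_eq_zero _, (hperp j).1.1, hB.isRefl _ _ (hperp i).1.1, hsome.fst_fst i j]
    · rintro (_ | i) (_ | j)
      exacts [hB.self_eq_zero _, (hperp j).2.2, hB.isRefl _ _ (hperp i).2.2, hsome.snd_snd i j]
    · rintro (_ | i)
      exacts [hnone, hsome.fst_snd_self i]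
    · rintro (_ | i) (_ | j) hij
      exacts [absurd rfl hij, (hperp j).2.1, hB.isRefl _ _ (hperp i).1.2,
        hsome.fst_snd_of_ne (ne_of_apply_ne some hij)]

/-- Splitting a symplectic family into its first pair and a symplectic family in the orthogonal
complement of that pair. -/
def symplecticFamilyOptionEquiv (hB : B.IsAlt) :
    {p : Option ι → V × V // IsSymplecticFamily B p} ≃
      Σ h : {h : V × V // B h.1 h.2 = 1},
        {p : ι → pairOrthogonal B h × pairOrthogonal B h //
          IsSymplecticFamily (B.restrict (pairOrthogonal B h)) p} where
  toFun p :=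
    have hp := (isSymplecticFamily_option_iff hB).1 p.2
    ⟨⟨p.1 none, hp.1⟩,
      fun i ↦ (⟨(p.1 (some i)).1, (hp.2.1 i).1⟩, ⟨(p.1 (some i)).2, (hp.2.1 i).2⟩),
      ⟨hp.2.2.fst_fst, hp.2.2.snd_snd, hp.2.2.fst_snd_self, hp.2.2.fst_snd_of_ne⟩⟩
  invFun s := ⟨fun o ↦ o.elim s.1.1 fun i ↦ ((s.2.1 i).1, (s.2.1 i).2),
    (isSymplecticFamily_option_iff hB).2 ⟨s.1.2, fun i ↦ ⟨(s.2.1 i).1.2, (s.2.1 i).2.2⟩,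
      ⟨s.2.2.fst_fst, s.2.2.snd_snd, s.2.2.fst_snd_self, s.2.2.fst_snd_of_ne⟩⟩⟩
  left_inv p := Subtype.ext <| funext fun o ↦ by cases o <;> rfl
  right_inv _ := rfl

end SymplecticFamily

theorem natCard_isSymplecticFamily {F V ι : Type*} [Field F] [Finite F] [AddCommGroup V]
    [Module F V] [Module.Finite F V] [Finite ι] {B : BilinForm F V} (hB : B.IsAlt)
    (hB' : B.Nondegenerate) (hV : finrank F V = 2 * Nat.card ι) :
    Nat.card {p : ι → V × V // IsSymplecticFamily B p} =
      Nat.card F ^ (Nat.card ι ^ 2) *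
        ∏ i ∈ Finset.range (Nat.card ι), (Nat.card F ^ (2 * (i + 1)) - 1) := by
  induction ι using Finite.induction_empty_option generalizing V with
  | of_equiv e ih =>
    have he := Nat.card_congr e
    rw [← he] at hV ⊢
    rw [← ih hB hB' hV]
    exact Nat.card_congr
      ((e.arrowCongr (Equiv.refl _)).symm.subtypeEquiv fun _ ↦
        (isSymplecticFamily_comp_equiv e).symm)
  | h_empty =>
    have : Unique {p : PEmpty → V × V // IsSymplecticFamily B p} :=
      { default := ⟨PEmpty.elim, nofun, nofun, nofun, fun {i} ↦ i.elim⟩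
        uniq _ := Subsingleton.elim _ _ }
    rw [Nat.card_unique]
    simp
  | @h_option κ _ ih =>
    set n := Nat.card κ
    have hn : Nat.card (Option κ) = n + 1 := Finite.card_option
    rw [hn] at hV ⊢
    have : Finite V := Module.finite_of_finite F
    have := Fintype.ofFinite {h : V × V // B h.1 h.2 = 1}
    have hrest (h : {h : V × V // B h.1 h.2 = 1}) :=
      ih (B := B.restrict (pairOrthogonal B h)) (fun v ↦ hB v)
        (nondegenerate_restrict_pairOrthogonal hB h.2 hB')
        (by have := finrank_pairOrthogonal_add_two hB h.2 hB'; lia)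
    rw [Nat.card_congr (symplecticFamilyOptionEquiv hB), Nat.card_sigma,
      Finset.sum_congr rfl fun h _ ↦ hrest h, Finset.sum_const, Finset.card_univ,
      ← Nat.card_eq_fintype_card, natCard_pairs_apply_eq_one hB', hV, Finset.prod_range_succ,
      show 2 * (n + 1) - 1 = 2 * n + 1 by lia, smul_eq_mul]
    ring

section SymplecticGroup

variable (l F : Type*) [Fintype l] [DecidableEq l]

theorem isAlt_toBilin'_J [CommRing F] : (toBilin' (J l F)).IsAlt := fun v ↦ by
  simp [toBilin'_apply', J, fromBlocks_mulVec, dotProduct, Fintype.sum_sum_type, neg_mulVec,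
    mul_comm]

theorem nondegenerate_toBilin'_J [Field F] : (toBilin' (J l F)).Nondegenerate :=
  BilinForm.nondegenerate_toBilin'_iff_det_ne_zero.2 (isUnit_det_J l F).ne_zero

/-- The pairs `(eᵢ, fᵢ)` of rows of a matrix. Since `J` has `-1` in its upper right block, `eᵢ` is
taken from the lower half of the rows and `fᵢ` from the upper half. -/
@[simps]
def matrixEquivRowPairs :
    Matrix (l ⊕ l) (l ⊕ l) F ≃ (l → (l ⊕ l → F) × (l ⊕ l → F)) where
  toFun A i := (A (.inr i), A (.inl i))
  invFun p := of (Sum.elim (fun i ↦ (p i).2) fun i ↦ (p i).1)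
  left_inv A := by ext (i | i) j <;> rfl
  right_inv _ := rfl

variable {l F}

theorem mul_J_mul_transpose_apply [CommRing F] (A : Matrix (l ⊕ l) (l ⊕ l) F) (i j : l ⊕ l) :
    (A * J l F * Aᵀ) i j = toBilin' (J l F) (A i) (A j) := by
  rw [toBilin'_apply', dotProduct_mulVec]
  rfl

theorem mem_symplecticGroup_iff_isSymplecticFamily [Field F] {A : Matrix (l ⊕ l) (l ⊕ l) F} :
    A ∈ symplecticGroup l F ↔
      IsSymplecticFamily (toBilin' (J l F)) (matrixEquivRowPairs l F A) := by
  have hB := isAlt_toBilin'_J l F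
  rw [SymplecticGroup.mem_iff, ← Matrix.ext_iff]
  simp only [mul_J_mul_transpose_apply]
  constructor
  · intro h
    exact
      { fst_fst i j := (h (.inr i) (.inr j)).trans (by simp [J])
        snd_snd i j := (h (.inl i) (.inl j)).trans (by simp [J])
        fst_snd_self i := (h (.inr i) (.inl i)).trans (by simp [J])
        fst_snd_of_ne {i j} hij := (h (.inr i) (.inl j)).trans (by simp [J, hij]) }
  · intro h
    have hef (i j : l) : toBilin' (J l F) (A (.inr i)) (A (.inl j)) = (1 : Matrix l l F) i j := by
      obtain rfl | hij := eq_or_ne i j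
      · simpa using h.fst_snd_self i
      · simpa [hij] using h.fst_snd_of_ne hij
    rintro (i | i) (j | j)
    · exact h.snd_snd i j
    · rw [← hB.neg_eq, hef, ← transpose_apply (1 : Matrix l l F), transpose_one]
      rfl
    · exact hef i j
    · exact h.fst_fst i j

theorem natCard_symplecticGroup (l F : Type*) [Fintype l] [DecidableEq l] [Field F] [Finite F] :
    Nat.card (symplecticGroup l F) = Nat.card F ^ (Fintype.card l ^ 2) *
      ∏ i ∈ Finset.range (Fintype.card l), (Nat.card F ^ (2 * (i + 1)) - 1) := by
  rw [Nat.card_congr ((matrixEquivRowPairs l F).subtypeEquiv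
      fun _ ↦ mem_symplecticGroup_iff_isSymplecticFamily),
    natCard_isSymplecticFamily (isAlt_toBilin'_J l F) (nondegenerate_toBilin'_J l F)
      (by simp [two_mul]),
    Nat.card_eq_fintype_card (α := l)]

end SymplecticGroup

section OrdProj

variable {p q : ℕ} [Fact p.Prime]

theorem not_dvd_of_dvd_sq_sub_one (hq : 0 < q) (hp : p ∣ q ^ 2 - 1) : ¬p ∣ q := fun h ↦ by
  have hone : p ∣ q ^ 2 - (q ^ 2 - 1) := Nat.dvd_sub (dvd_pow h two_ne_zero) hp
  rw [Nat.sub_sub_self (Nat.one_le_pow 2 q hq)] at hone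
  exact (Fact.out : p.Prime).not_dvd_one hone

theorem padicValNat_pow_two_mul_sub_one {n : ℕ} (hq : 1 < q) (hp : p ∣ q ^ 2 - 1) (hn : n ≠ 0) :
    padicValNat p (q ^ (2 * n) - 1) = padicValNat p (q ^ 2 - 1) + padicValNat p n := by
  have hpq : ¬p ∣ q := not_dvd_of_dvd_sq_sub_one (by lia) hp
  obtain rfl | hodd := (Fact.out : p.Prime).eq_two_or_odd'
  · have hpow := padicValNat.pow_two_sub_one hq hpq (n := 2 * n) (by lia) (even_two_mul n)
    have hsq := padicValNat.pow_two_sub_one hq hpq (n := 2) two_ne_zero even_two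
    rw [padicValNat.mul two_ne_zero hn] at hpow
    lia
  · have hpq2 : ¬p ∣ q ^ 2 := fun h ↦ hpq ((Fact.out : p.Prime).dvd_of_dvd_pow h)
    simpa [pow_mul] using padicValNat.pow_sub_pow hodd (Nat.one_lt_pow two_ne_zero hq) hp hpq2 hn

theorem ordProj_pow_two_mul_sub_one {n : ℕ} (hq : 1 < q) (hp : p ∣ q ^ 2 - 1) (hn : n ≠ 0) :
    ordProj[p] (q ^ (2 * n) - 1) = ordProj[p] (q ^ 2 - 1) * ordProj[p] n := by
  simp only [Nat.factorization_def _ Fact.out, padicValNat_pow_two_mul_sub_one hq hp hn, pow_add]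

theorem ordProj_prod_pow_two_mul_sub_one (hq : 1 < q) (hp : p ∣ q ^ 2 - 1) (m : ℕ) :
    ordProj[p] (∏ i ∈ Finset.range m, (q ^ (2 * (i + 1)) - 1)) =
      ordProj[p] (q ^ 2 - 1) ^ m * ordProj[p] m ! := by
  have hne (i : ℕ) : q ^ (2 * (i + 1)) - 1 ≠ 0 :=
    Nat.sub_ne_zero_of_lt (Nat.one_lt_pow (by lia) hq)
  induction m with
  | zero => simp
  | succ m ih =>
    rw [Finset.prod_range_succ, Nat.ordProj_mul p (Finset.prod_ne_zero_iff.2 fun i _ ↦ hne i)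
      (hne m), ih, ordProj_pow_two_mul_sub_one hq hp m.succ_ne_zero, Nat.factorial_succ,
      Nat.ordProj_mul p m.succ_ne_zero m.factorial_ne_zero, pow_succ]
    ring

end OrdProj

theorem stmt6_general {p : ℕ} [Fact p.Prime] {l F : Type*} [Fintype l] [DecidableEq l] [Field F]
    [Finite F] (hp : p ∣ Nat.card F ^ 2 - 1) (P : Sylow p (symplecticGroup l F)) :
    Nat.card P = ordProj[p] (Nat.card F ^ 2 - 1) ^ Fintype.card l *
      ordProj[p] (Fintype.card l)! := by
  have hF : 1 < Nat.card F := Finite.one_lt_card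
  have hpF : ¬p ∣ Nat.card F ^ (Fintype.card l ^ 2) := fun h ↦
    not_dvd_of_dvd_sq_sub_one (by lia) hp ((Fact.out : p.Prime).dvd_of_dvd_pow h)
  have hcard := natCard_symplecticGroup l F
  have hne := hcard ▸ (Nat.card_pos (α := symplecticGroup l F)).ne'
  rw [P.card_eq_multiplicity, hcard,
    Nat.ordProj_mul p (left_ne_zero_of_mul hne) (right_ne_zero_of_mul hne),
    Nat.factorization_eq_zero_of_not_dvd hpF, pow_zero, one_mul,
    ordProj_prod_pow_two_mul_sub_one hF hp]

/-- If `q` is an odd prime power and `F` is a field with `q` elements, then the order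
of a Sylow `2`-subgroup of the symplectic group `Sp_{2m}(F)` equals
`((q^2 - 1)_2)^m * (m!)_2`. -/
theorem stmt6 (q m : ℕ) (hq : IsPrimePow q) (hqodd : Odd q) (hm : 1 ≤ m)
    (F : Type*) [Field F] [Fintype F] (hF : Fintype.card F = q)
    (P : Sylow 2 ↥(Matrix.symplecticGroup (Fin m) F)) :
    Nat.card ↥(P : Subgroup ↥(Matrix.symplecticGroup (Fin m) F)) =
      twoPart (q ^ 2 - 1) ^ m * twoPart (Nat.factorial m) := by
  subst hF
  have htwo : 2 ∣ Nat.card F ^ 2 - 1 := by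
    rw [Nat.card_eq_fintype_card]
    exact (Nat.Odd.sub_odd hqodd.pow odd_one).two_dvd
  simpa [twoPart] using stmt6_general htwo P
end

section
/- Let G be the symmetric group on 8 letters and let H be a Sylow 2-subgroup of G. Then for every g ∈ G, the intersection H ∩ gHg⁻¹ is a nontrivial subgroup of G. -/
/-!
Identify the eight points with `A × ℤ/2`, where `A` is a Klein four-group, and let `f` be the
projection to `A`. The permutations inducing a translation on the values of `f` form a `2`-group,
so every Sylow `2`-subgroup contains such a group, for some two-to-one map `f`. It therefore
suffices that for two such maps `f` and `g` these groups meet nontrivially.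

Let `s` and `t` be the involutions exchanging the two points of each fiber of `f` and of `g`. If
`s x = t x` for some `x`, the transposition of `x` and `s x` lies in both groups. Otherwise `s * t`
has no fixed points, and since `s` maps each of its cycles to a different cycle, all its cycles have
length two or all have length four. Some power `z` of `s * t` is thus a fixed-point-free involution.
It commutes with `s`, so it permutes the fibers of `f`, and it fixes none of them because `s x`
never lies in the cycle of `x`. On the four elements of `A`, an involution without fixed points is a
translation. Hence `z` lies in the group of `f`, and likewise in that of `g`.
-/

section DihedralCycles

open Equiv Equiv.Perm Finset

/-- `s` is an involution without fixed points; its orbits form a perfect matching of `α`. -/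
structure IsFreeInvolution {α : Type*} (s : Perm α) : Prop where
  mul_self : s * s = 1
  apply_ne (x : α) : s x ≠ x

/-- The orbit of `x` under the dihedral group generated by `s` and `t`: the cycle of `s * t` through
`x` together with its image under `s`. As `Equiv.Perm.cycleOf` has empty support at fixed points,
this is meaningful only if `s * t` has none. -/
def dihedralOrbit {α : Type*} [Fintype α] [DecidableEq α] (s t : Perm α) (x : α) :
    Finset α :=
  ((s * t).cycleOf x).support ∪ ((s * t).cycleOf (s x)).support

theorem semiconjBy_mul_inv_of_mul_self {G : Type*} [Group G] {s t : G} (hs : s * s = 1)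
    (ht : t * t = 1) : SemiconjBy s (s * t) (s * t)⁻¹ := by
  rw [SemiconjBy, mul_inv_rev, inv_eq_of_mul_eq_one_left hs, inv_eq_of_mul_eq_one_left ht,
    ← mul_assoc, hs, mul_assoc, hs, one_mul, mul_one]

theorem commute_mul_pow_left {G : Type*} [Group G] {s t : G} (hs : s * s = 1) (ht : t * t = 1)
    {k : ℕ} (hk : (s * t) ^ k * (s * t) ^ k = 1) : Commute ((s * t) ^ k) s := by
  have h := (semiconjBy_mul_inv_of_mul_self hs ht).pow_right k
  rw [inv_pow, inv_eq_of_mul_eq_one_left hk] at h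
  exact h.symm

theorem commute_mul_pow_right {G : Type*} [Group G] {s t : G} (hs : s * s = 1) (ht : t * t = 1)
    {k : ℕ} (hk : (s * t) ^ k * (s * t) ^ k = 1) : Commute ((s * t) ^ k) t := by
  have h := (commute_mul_pow_left hs ht hk).mul_right ((Commute.refl (s * t)).pow_left k)
  rwa [← mul_assoc, hs, one_mul] at h

namespace IsFreeInvolution

variable {α : Type*} {s t : Perm α}

theorem apply_apply (hs : IsFreeInvolution s) (x : α) : s (s x) = x :=
  DFunLike.congr_fun hs.mul_self x

theorem mul_apply_ne (hs : IsFreeInvolution s) (hst : ∀ x, s x ≠ t x) (x : α) :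
    (s * t) x ≠ x := fun h =>
  hst x <| by rw [← hs.apply_apply (t x), ← mul_apply s t, h]

theorem sameCycle_mul_apply_apply (hs : IsFreeInvolution s) (ht : IsFreeInvolution t) (x y : α) :
    (s * t).SameCycle (s x) (s y) ↔ (s * t).SameCycle x y := by
  have h := (semiconjBy_mul_inv_of_mul_self hs.mul_self ht.mul_self).eq
  rw [← sameCycle_inv, eq_mul_inv_of_mul_eq h.symm, sameCycle_conj, ← mul_apply, ← mul_apply,
    inv_mul_cancel, one_apply, one_apply]

theorem not_sameCycle_mul_apply_left (hs : IsFreeInvolution s) (ht : IsFreeInvolution t) (x : α) :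
    ¬ (s * t).SameCycle x (s x) := by
  rintro ⟨k, hk⟩
  have apply_zpow (m : ℤ) : s (((s * t) ^ m) x) = ((s * t) ^ (k - m)) x := by
    have h := DFunLike.congr_fun
      ((semiconjBy_mul_inv_of_mul_self hs.mul_self ht.mul_self).zpow_right m).eq x
    rw [mul_apply, mul_apply, ← hk, inv_zpow'] at h
    rw [h, sub_eq_neg_add, zpow_add, mul_apply]
  -- The reflection `s * (s * t) ^ k`, which fixes `x`, is conjugate to `s` or to `t`.
  obtain ⟨m, rfl | rfl⟩ := Int.even_or_odd' k
  · exact hs.apply_ne (((s * t) ^ m) x) <| by rw [apply_zpow]; congr 2; ring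
  · refine ht.apply_ne (((s * t) ^ m) x) ?_
    calc t (((s * t) ^ m) x) = s (((s * t) ^ (m + 1)) x) := by
          rw [add_comm, zpow_one_add, mul_apply, mul_apply, hs.apply_apply]
      _ = ((s * t) ^ m) x := by rw [apply_zpow]; congr 2; ring

theorem not_sameCycle_mul_apply_right (hs : IsFreeInvolution s) (ht : IsFreeInvolution t) (x : α) :
    ¬ (s * t).SameCycle x (t x) := by
  have h := hs.not_sameCycle_mul_apply_left ht ((s * t) x)
  rwa [sameCycle_apply_left, mul_apply, hs.apply_apply] at h

section Finite

variable [Fintype α] [DecidableEq α]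

theorem mem_dihedralOrbit (hs : IsFreeInvolution s) (hst : ∀ x, s x ≠ t x) {x y : α} :
    y ∈ dihedralOrbit s t x ↔ (s * t).SameCycle x y ∨ (s * t).SameCycle (s x) y := by
  rw [dihedralOrbit, mem_union, mem_support_cycleOf_iff' (hs.mul_apply_ne hst x),
    mem_support_cycleOf_iff' (hs.mul_apply_ne hst (s x))]

theorem card_support_cycleOf_apply (hs : IsFreeInvolution s) (ht : IsFreeInvolution t)
    (hst : ∀ x, s x ≠ t x) (x : α) :
    #((s * t).cycleOf (s x)).support = #((s * t).cycleOf x).support :=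
  .symm <| card_equiv s fun y => by
    rw [mem_support_cycleOf_iff' (hs.mul_apply_ne hst _),
      mem_support_cycleOf_iff' (hs.mul_apply_ne hst _), hs.sameCycle_mul_apply_apply ht]

theorem card_dihedralOrbit (hs : IsFreeInvolution s) (ht : IsFreeInvolution t)
    (hst : ∀ x, s x ≠ t x) (x : α) :
    #(dihedralOrbit s t x) = 2 * #((s * t).cycleOf x).support := by
  rw [dihedralOrbit, card_union_of_disjoint, hs.card_support_cycleOf_apply ht hst, two_mul]
  rw [Finset.disjoint_left]
  intro y hy hy'
  rw [mem_support_cycleOf_iff' (hs.mul_apply_ne hst _)] at hy hy'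
  exact hs.not_sameCycle_mul_apply_left ht x (hy.trans hy'.symm)

theorem card_support_cycleOf_eq_of_mem_dihedralOrbit (hs : IsFreeInvolution s)
    (ht : IsFreeInvolution t) (hst : ∀ x, s x ≠ t x) {x y : α} (hy : y ∈ dihedralOrbit s t x) :
    #((s * t).cycleOf y).support = #((s * t).cycleOf x).support := by
  rcases (hs.mem_dihedralOrbit hst).1 hy with h | h
  · rw [h.cycleOf_eq]
  · rw [← h.cycleOf_eq, hs.card_support_cycleOf_apply ht hst]

theorem disjoint_dihedralOrbit (hs : IsFreeInvolution s) (ht : IsFreeInvolution t)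
    (hst : ∀ x, s x ≠ t x) {x y : α} (hy : y ∉ dihedralOrbit s t x) :
    Disjoint (dihedralOrbit s t x) (dihedralOrbit s t y) := by
  rw [hs.mem_dihedralOrbit hst, not_or] at hy
  have apply_left (a b : α) : (s * t).SameCycle a (s b) ↔ (s * t).SameCycle (s a) b := by
    rw [← hs.sameCycle_mul_apply_apply ht, hs.apply_apply]
  rw [Finset.disjoint_left]
  intro z hx hz
  rw [hs.mem_dihedralOrbit hst] at hx hz
  rcases hx with hx | hx <;> rcases hz with hz | hz
  · exact hy.1 (hx.trans hz.symm)
  · exact hy.2 ((apply_left x y).1 (hx.trans hz.symm))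
  · exact hy.2 (hx.trans hz.symm)
  · exact hy.1 ((hs.sameCycle_mul_apply_apply ht x y).1 (hx.trans hz.symm))

theorem exists_card_support_cycleOf_eq (hα : Fintype.card α = 8) (hs : IsFreeInvolution s)
    (ht : IsFreeInvolution t) (hst : ∀ x, s x ≠ t x) :
    ∃ k, ∀ x, #((s * t).cycleOf x).support = 2 * k := by
  have two_le (x : α) : 2 ≤ #((s * t).cycleOf x).support :=
    two_le_card_support_cycleOf_iff.2 (hs.mul_apply_ne hst x)
  have add_le {x y : α} (hy : y ∉ dihedralOrbit s t x) :
      #((s * t).cycleOf x).support + #((s * t).cycleOf y).support ≤ 4 := by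
    have h := card_le_univ (dihedralOrbit s t x ∪ dihedralOrbit s t y)
    rw [card_union_of_disjoint (hs.disjoint_dihedralOrbit ht hst hy),
      hs.card_dihedralOrbit ht hst, hs.card_dihedralOrbit ht hst, hα] at h
    lia
  by_cases hlong : ∃ x, 2 < #((s * t).cycleOf x).support
  · obtain ⟨x, hx⟩ := hlong
    have mem_orbit (y : α) : y ∈ dihedralOrbit s t x := by
      by_contra hy
      have := add_le hy
      have := two_le y
      lia
    have hcard := hs.card_dihedralOrbit ht hst x
    rw [eq_univ_of_forall mem_orbit, card_univ, hα] at hcard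
    refine ⟨2, fun y => ?_⟩
    rw [hs.card_support_cycleOf_eq_of_mem_dihedralOrbit ht hst (mem_orbit y)]
    lia
  · push Not at hlong
    exact ⟨1, fun x => (hlong x).antisymm (two_le x)⟩

end Finite

theorem exists_isFreeInvolution_mul_pow [Fintype α] (hα : Fintype.card α = 8)
    (hs : IsFreeInvolution s) (ht : IsFreeInvolution t) (hst : ∀ x, s x ≠ t x) :
    ∃ k : ℕ, IsFreeInvolution ((s * t) ^ k) := by
  classical
  obtain ⟨k, hk⟩ := hs.exists_card_support_cycleOf_eq hα ht hst
  have pow_apply_eq (n : ℕ) (x : α) : ((s * t) ^ n) x = x ↔ 2 * k ∣ n := by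
    rw [← hk x]
    exact (isCycleOn_support_cycleOf (s * t) x).pow_apply_eq <|
      (mem_support_cycleOf_iff' (hs.mul_apply_ne hst x)).2 .rfl
  refine ⟨k, ?_, fun x h => ?_⟩
  · ext1 x
    rw [← pow_add, ← two_mul]
    exact (pow_apply_eq _ x).2 dvd_rfl
  · have two_le := two_le_card_support_cycleOf_iff.2 (hs.mul_apply_ne hst x)
    rw [hk x] at two_le
    have := Nat.le_of_dvd (by lia) ((pow_apply_eq k x).1 h)
    lia

end IsFreeInvolution

end DihedralCycles

section FiberTranslations

open Equiv Equiv.Perm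

/-- The permutations of `α` that induce a translation of `A` on the values of `f : α → A`. If
`f` is two-to-one and `A` is a Klein four-group, this is a `2`-group. -/
def fiberTranslations {α A : Type*} [AddGroup A] (f : α → A) : Subgroup (Perm α) where
  carrier := {σ | ∃ c, ∀ x, f (σ x) = f x + c}
  one_mem' := ⟨0, fun _ => (add_zero _).symm⟩
  mul_mem' := by
    rintro σ τ ⟨c, hc⟩ ⟨d, hd⟩
    exact ⟨d + c, fun x => by rw [mul_apply, hc, hd, add_assoc]⟩
  inv_mem' := by
    rintro σ ⟨c, hc⟩
    exact ⟨-c, fun x => by rw [eq_add_neg_iff_add_eq, ← hc, ← mul_apply,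
      mul_inv_cancel, one_apply]⟩

theorem swap_mem_fiberTranslations {α A : Type*} [DecidableEq α] [AddGroup A] {f : α → A} {x y : α}
    (h : f x = f y) : swap x y ∈ fiberTranslations f := by
  refine ⟨0, fun z => ?_⟩
  rw [add_zero, swap_apply_def]
  split_ifs with hx hy
  · rw [hx, h]
  · rw [hy, h]
  · rfl

theorem conj_mem_fiberTranslations_comp_inv {α A : Type*} [AddGroup A] {f : α → A}
    {σ : Perm α} (τ : Perm α) :
    τ * σ * τ⁻¹ ∈ fiberTranslations (f ∘ ⇑τ⁻¹) ↔ σ ∈ fiberTranslations f :=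
  exists_congr fun c => τ⁻¹.forall_congr fun x => by simp

theorem sub_eq_sub_of_ne_of_isAddKleinFour {A : Type*} [AddCommGroup A] [IsAddKleinFour A]
    {a b c d : A} (hab : a ≠ b) (hac : a ≠ c) (had : a ≠ d) (hbc : b ≠ c) (hbd : b ≠ d)
    (hcd : c ≠ d) : b - a = d - c := by
  have hd : d - c = a - c + (b - c) := IsAddKleinFour.eq_add_of_ne_all
    (sub_ne_zero.2 hac) (sub_ne_zero.2 hbc) (sub_left_injective.ne hab) (sub_ne_zero.2 hcd.symm)
    (sub_left_injective.ne had.symm) (sub_left_injective.ne hbd.symm)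
  have h : b - a = b + a := by rw [sub_eq_add_neg, IsAddKleinFour.neg_eq_self]
  have h' : c + c = 0 := IsAddKleinFour.add_self c
  rw [h, hd, sub_add_sub_comm, h', sub_zero, add_comm]

/-- `s` exchanges the two points of each nonempty fiber of `f`. This also encodes that `f` is
two-to-one onto its image. -/
structure IsFiberSwap {α A : Type*} (s : Perm α) (f : α → A) : Prop where
  apply_ne (x : α) : s x ≠ x
  map_eq_iff {x y : α} : f x = f y ↔ y = x ∨ y = s x

namespace IsFiberSwap

variable {α A B : Type*} {s t : Perm α} {f : α → A} {g : α → B}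

theorem map_apply (hs : IsFiberSwap s f) (x : α) : f (s x) = f x :=
  (hs.map_eq_iff.2 (.inr rfl)).symm

theorem isFreeInvolution (hs : IsFiberSwap s f) : IsFreeInvolution s where
  mul_self := Equiv.ext fun x =>
    ((hs.map_eq_iff.1 (hs.map_apply x)).resolve_left (hs.apply_ne x).symm).symm
  apply_ne := hs.apply_ne

theorem comp_inv (hs : IsFiberSwap s f) (τ : Perm α) : IsFiberSwap (τ * s * τ⁻¹) (f ∘ ⇑τ⁻¹) where
  apply_ne x h := hs.apply_ne (τ⁻¹ x) <| by simpa [← eq_inv_iff_eq] using h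
  map_eq_iff {x y} := by
    rw [Function.comp_apply, Function.comp_apply, hs.map_eq_iff, τ⁻¹.injective.eq_iff, mul_apply,
      mul_apply, inv_eq_iff_eq]

theorem apply_apply_eq_of_map_eq (hs : IsFiberSwap s f) {τ : Perm α} (hτ : ∀ x, f (τ x) = f x)
    (x : α) : τ (τ x) = x := by
  rcases hs.map_eq_iff.1 (hτ x).symm with h | h
  · rw [h, h]
  · have hne : τ (s x) ≠ s x := fun h' => hs.apply_ne x (τ.injective (h'.trans h.symm))
    rw [h]
    exact (hs.map_eq_iff.1 ((hs.map_apply x).symm.trans (hτ (s x)).symm)).resolve_right hne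

theorem isPGroup_fiberTranslations [AddGroup A] (hA : ∀ a : A, a + a = 0)
    (hs : IsFiberSwap s f) : IsPGroup 2 (fiberTranslations f) := by
  rintro ⟨σ, c, hc⟩
  have map_sq (x : α) : f ((σ * σ) x) = f x := by
    rw [mul_apply, hc, hc, add_assoc, hA, add_zero]
  refine ⟨2, Subtype.ext (Equiv.ext fun x => ?_)⟩
  simpa [pow_succ] using hs.apply_apply_eq_of_map_eq map_sq x

theorem map_apply_eq_iff (hs : IsFiberSwap s f) {z : Perm α} (hzs : Commute z s) {x y : α} :
    f (z x) = f (z y) ↔ f x = f y := by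
  have apply_comm : z (s x) = s (z x) := DFunLike.congr_fun hzs.eq x
  rw [hs.map_eq_iff, hs.map_eq_iff, ← apply_comm, z.injective.eq_iff, z.injective.eq_iff]

theorem mem_fiberTranslations [AddCommGroup A] [IsAddKleinFour A] (hs : IsFiberSwap s f)
    {z : Perm α} (hz : IsFreeInvolution z) (hzs : Commute z s) (hne : ∀ x, z x ≠ s x) :
    z ∈ fiberTranslations f := by
  have map_ne (x : α) : f x ≠ f (z x) := fun h =>
    (hs.map_eq_iff.1 h).elim (hz.apply_ne x) (hne x)
  have map_eq_map {x y : α} (h : f y = f (z x)) : f (z y) = f x := by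
    rw [← hz.apply_apply x, hs.map_apply_eq_iff hzs, h]
  have sub_eq_sub (x y : α) : f (z x) - f x = f (z y) - f y := by
    by_cases hy : f x = f y
    · rw [(hs.map_apply_eq_iff hzs).2 hy, hy]
    by_cases hy' : f y = f (z x)
    · rw [map_eq_map hy', hy', ← neg_sub, IsAddKleinFour.neg_eq_self]
    refine sub_eq_sub_of_ne_of_isAddKleinFour (map_ne x) hy (fun h => ?_) (Ne.symm hy')
      (fun h => ?_) (map_ne y)
    · exact hy' (map_eq_map h).symm
    · exact hy ((hs.map_apply_eq_iff hzs).1 h)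
  rcases isEmpty_or_nonempty α with _ | ⟨⟨x⟩⟩
  · exact ⟨0, isEmptyElim⟩
  · exact ⟨f (z x) - f x, fun y => by rw [sub_eq_sub x y, add_sub_cancel]⟩

theorem fiberTranslations_inf_ne_bot [Fintype α] (hα : Fintype.card α = 8)
    [AddCommGroup A] [IsAddKleinFour A] [AddCommGroup B] [IsAddKleinFour B]
    (hs : IsFiberSwap s f) (ht : IsFiberSwap t g) :
    fiberTranslations f ⊓ fiberTranslations g ≠ ⊥ := by
  classical
  have hs' := hs.isFreeInvolution
  have ht' := ht.isFreeInvolution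
  rw [Subgroup.ne_bot_iff_exists_ne_one]
  suffices ∃ z ≠ 1, z ∈ fiberTranslations f ∧ z ∈ fiberTranslations g by
    obtain ⟨z, hz, hf, hg⟩ := this
    exact ⟨⟨z, hf, hg⟩, fun h => hz (congrArg Subtype.val h)⟩
  by_cases hst : ∃ x, s x = t x
  · obtain ⟨x, hx⟩ := hst
    refine ⟨swap x (s x), fun h => hs.apply_ne x (swap_eq_one_iff.1 h).symm,
      swap_mem_fiberTranslations (hs.map_apply x).symm, swap_mem_fiberTranslations ?_⟩
    rw [hx, ht.map_apply]
  · push Not at hst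
    obtain ⟨k, hk⟩ := hs'.exists_isFreeInvolution_mul_pow hα ht' hst
    have sameCycle_pow (x : α) : (s * t).SameCycle x (((s * t) ^ k) x) :=
      sameCycle_pow_right.2 .rfl
    have : Nonempty α := Fintype.card_pos_iff.1 (by lia)
    refine ⟨(s * t) ^ k, fun h => hk.apply_ne (Classical.arbitrary α) (by rw [h, one_apply]),
      hs.mem_fiberTranslations hk (commute_mul_pow_left hs'.mul_self ht'.mul_self hk.mul_self) ?_,
      ht.mem_fiberTranslations hk (commute_mul_pow_right hs'.mul_self ht'.mul_self hk.mul_self) ?_⟩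
    · exact fun x h => hs'.not_sameCycle_mul_apply_left ht' x (h ▸ sameCycle_pow x)
    · exact fun x h => hs'.not_sameCycle_mul_apply_right ht' x (h ▸ sameCycle_pow x)

end IsFiberSwap

theorem exists_isFiberSwap {α A : Type*} [Fintype α] [Fintype A]
    (h : Fintype.card α = Fintype.card A * 2) :
    ∃ (s : Perm α) (f : α → A), IsFiberSwap s f := by
  let e : α ≃ A × Bool := Fintype.equivOfCardEq (by rw [h, Fintype.card_prod, Fintype.card_bool])
  refine ⟨e.symm.permCongr (Equiv.prodCongr (.refl A) Equiv.boolNot), fun x => (e x).1,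
    fun x h => ?_, fun {x y} => ?_⟩
  · simp [Equiv.permCongr_apply, Equiv.symm_apply_eq, Prod.ext_iff] at h
  · rw [Equiv.permCongr_apply, Equiv.symm_symm, ← e.apply_eq_iff_eq (x := y) (y := x),
      Equiv.eq_symm_apply]
    rcases e x with ⟨a, i⟩
    rcases e y with ⟨b, j⟩
    cases i <;> cases j <;> simp [eq_comm]

theorem exists_fiberTranslations_le_sylow {α : Type*} [Fintype α] (hα : Fintype.card α = 8)
    (P : Sylow 2 (Perm α)) :
    ∃ (s : Perm α) (f : α → ZMod 2 × ZMod 2), IsFiberSwap s f ∧ fiberTranslations f ≤ P := by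
  obtain ⟨s, f, hs⟩ := exists_isFiberSwap (α := α) (A := ZMod 2 × ZMod 2) <| by
    rw [hα, Fintype.card_prod, ZMod.card]
  obtain ⟨Q, hQ⟩ := (hs.isPGroup_fiberTranslations IsAddKleinFour.add_self).exists_le_sylow
  obtain ⟨τ, rfl⟩ := MulAction.exists_smul_eq (Perm α) Q P
  refine ⟨τ * s * τ⁻¹, f ∘ ⇑τ⁻¹, hs.comp_inv τ, fun σ hσ => ?_⟩
  have hconj : τ * (τ⁻¹ * σ * τ) * τ⁻¹ = σ := by group
  rw [← hconj] at hσ ⊢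
  exact Subgroup.smul_mem_pointwise_smul _ (MulAut.conj τ) (Q : Subgroup (Perm α))
    (hQ ((conj_mem_fiberTranslations_comp_inv τ).1 hσ))

end FiberTranslations

theorem stmt8_general {α : Type*} [Fintype α] (hα : Fintype.card α = 8)
    (P Q : Sylow 2 (Equiv.Perm α)) :
    (P : Subgroup (Equiv.Perm α)) ⊓ (Q : Subgroup (Equiv.Perm α)) ≠ ⊥ := by
  obtain ⟨s, f, hs, hf⟩ := exists_fiberTranslations_le_sylow hα P
  obtain ⟨t, g, ht, hg⟩ := exists_fiberTranslations_le_sylow hα Q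
  exact ne_bot_of_le_ne_bot (hs.fiberTranslations_inf_ne_bot hα ht) (inf_le_inf hf hg)

/-- If `H` is a Sylow `2`-subgroup of the symmetric group `S₈`, then `H ∩ gHg⁻¹` is
nontrivial for every `g`. -/
theorem stmt8 (H : Sylow 2 (Equiv.Perm (Fin 8))) (g : Equiv.Perm (Fin 8)) :
    (H : Subgroup (Equiv.Perm (Fin 8))) ⊓
      (H : Subgroup (Equiv.Perm (Fin 8))).map (MulAut.conj g).toMonoidHom ≠ ⊥ :=
  stmt8_general (Fintype.card_fin 8) H (g • H)
end

section
/- Let G be the automorphism group of the alternating group A_6 on 6 letters (so G ≅ L_2(9).2^2), and let H be a Sylow 2-subgroup of G. Then for every g ∈ G, the intersection H ∩ gHg⁻¹ is a nontrivial subgroup of G. -/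
/-!
Let `t` be an involution of `A₆`, acted on by `Aut A₆`, and choose `y` of order `4` with `t * y` of
order `5` and `⟨t, y⟩ = A₆`. An automorphism fixing `t` is determined by the image of `y`, one of
the `32` elements `x` of order `4` such that `t * x` has order `5`; as `A₆` has `45` involutions,
`|Aut A₆| ≤ 45 * 32 = 1440`. Conversely `S₆` embeds in `Aut A₆` by conjugation, and properly so:
`A₅` acts transitively on its six Sylow `5`-subgroups, which gives a transitive subgroup of `A₆` of
index `6`; the action of `A₆` on its cosets is an automorphism taking it to a point stabilizer, so
it is not conjugation by a permutation. Hence `|Aut A₆| = 1440`, and the stabilizers of involutions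
have order `32` and index `45`: they are Sylow `2`-subgroups. If two of them met trivially, one
would have an orbit of length `32` on the involutions, but the stabilizer of `t` preserves the
partition of the `45` involutions `s` into the `17` with `(t * s) ^ 5 = 1` and the other `28`.
-/

open Equiv MulAction
open scoped commutatorElement

section MulAction

variable {G X : Type*} [Group G] [MulAction G X] {x : X}

theorem card_stabilizer_le_of_inf_stabilizer_eq_bot {y : X} (s : Finset X)
    (hs : ∀ g ∈ stabilizer G x, g • y ∈ s) (h : stabilizer G x ⊓ stabilizer G y = ⊥) :
    Nat.card (stabilizer G x) ≤ s.card := by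
  have hinj : Function.Injective fun g : stabilizer G x ↦ (⟨g.1 • y, hs g g.2⟩ : s) := by
    intro g k hgk
    have hfix : (k : G)⁻¹ * g ∈ stabilizer G x ⊓ stabilizer G y := by
      refine Subgroup.mem_inf.2 ⟨mul_mem (inv_mem k.2) g.2, ?_⟩
      rw [mem_stabilizer_iff, mul_smul, inv_smul_eq_iff]
      exact congrArg Subtype.val hgk
    rw [h, Subgroup.mem_bot, inv_mul_eq_one] at hfix
    exact Subtype.ext hfix.symm
  simpa using Nat.card_le_card_of_injective _ hinj

theorem sylow_inf_map_conj_ne_bot_of_eq_stabilizer {p : ℕ} [Fact p.Prime] [Finite (Sylow p G)]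
    {P : Sylow p G} (hP : (P : Subgroup G) = stabilizer G x)
    (h : ∀ g : G, stabilizer G x ⊓ stabilizer G (g • x) ≠ ⊥) (H : Sylow p G) (g : G) :
    (H : Subgroup G) ⊓ (H : Subgroup G).map (MulAut.conj g).toMonoidHom ≠ ⊥ := by
  obtain ⟨k, rfl⟩ := exists_smul_eq G P H
  have hk : ((k • P : Sylow p G) : Subgroup G) = stabilizer G (k • x) := by
    rw [stabilizer_smul_eq_stabilizer_map_conj, ← hP]
    rfl
  have hg : g • k • x = k • (k⁻¹ * g * k) • x := by simp only [mul_smul, smul_inv_smul]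
  rw [hk, ← stabilizer_smul_eq_stabilizer_map_conj, hg, stabilizer_smul_eq_stabilizer_map_conj,
    stabilizer_smul_eq_stabilizer_map_conj k ((k⁻¹ * g * k) • x),
    ← Subgroup.map_inf_eq _ _ _ (MulAut.conj k).injective, Ne,
    Subgroup.map_eq_bot_iff_of_injective _ (MulAut.conj k).injective]
  exact h _

end MulAction

section MulAut

variable {G : Type*} [Group G]

theorem stabilizer_mulAut_inf_eq_bot {a b : G} (h : Subgroup.closure {a, b} = ⊤) :
    stabilizer (MulAut G) a ⊓ stabilizer (MulAut G) b = ⊥ := by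
  refine (Subgroup.eq_bot_iff_forall _).2 fun f ⟨ha, hb⟩ ↦ ?_
  have hf : f.toMonoidHom = MonoidHom.id G :=
    MonoidHom.eq_of_eqOn_dense h (by rintro _ (rfl | rfl); exacts [ha, hb])
  exact MulEquiv.ext fun x ↦ DFunLike.congr_fun hf x

theorem mul_smul_pow_eq_one_iff {f : MulAut G} {a : G} (hf : f ∈ stabilizer (MulAut G) a) (x : G)
    (n : ℕ) : (a * f • x) ^ n = 1 ↔ (a * x) ^ n = 1 := by
  have ha : f a = a := hf
  nth_rw 1 [← ha]
  rw [MulAut.smul_def, ← map_mul, ← map_pow, EmbeddingLike.map_eq_one_iff]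

variable [Fintype G] [DecidableEq G]

variable (G) in
/-- The elements of order two of a finite group, as a `Finset`; its members are the points on which
the automorphism group acts in the main argument. -/
def involutions : Finset G := {x | x ^ 2 = 1 ∧ x ≠ 1}

theorem mem_involutions {x : G} : x ∈ involutions G ↔ x ^ 2 = 1 ∧ x ≠ 1 := by
  rw [involutions, Finset.mem_filter_univ]

theorem mulAut_smul_mem_involutions (f : MulAut G) {x : G} (hx : x ∈ involutions G) :
    f • x ∈ involutions G := by
  rw [mem_involutions] at hx ⊢
  simpa only [MulAut.smul_def, ← map_pow, EmbeddingLike.map_eq_one_iff, Ne] using hx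

end MulAut

section Alternating

variable {α : Type*}

theorem isPreprimitive_of_isCycle_of_apply_ne {G : Subgroup (Perm α)} {a : α} {σ τ : Perm α}
    (hσG : σ ∈ G) (hτG : τ ∈ G) (hσ : σ.IsCycle) (ha : ∀ x, σ x = x ↔ x = a) (hτ : τ a ≠ a) :
    IsPreprimitive G α := by
  have exists_move {x y : α} (hx : x ≠ a) (hy : y ≠ a) : ∃ g ∈ G, g a = a ∧ g x = y := by
    obtain ⟨k, hk⟩ := hσ.exists_zpow_eq (mt (ha x).1 hx) (mt (ha y).1 hy)
    exact ⟨σ ^ k, zpow_mem hσG k, Perm.zpow_apply_eq_self_of_apply_eq_self ((ha a).2 rfl) k, hk⟩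
  have exists_move_to (x : α) : ∃ g ∈ G, g x = a := by
    rcases eq_or_ne x a with rfl | hx
    · exact ⟨1, one_mem G, rfl⟩
    · have hτ' : τ⁻¹ a ≠ a := fun h ↦ hτ (Perm.inv_eq_iff_eq.1 h).symm
      obtain ⟨g, hg, -, hgx⟩ := exists_move hx hτ'
      exact ⟨τ * g, mul_mem hτG hg, by simp [hgx]⟩
  refine isPreprimitive_of_is_two_pretransitive (is_two_pretransitive_iff.2 ?_)
  intro x y x' y' hxy hxy'
  obtain ⟨g, hg, hgx⟩ := exists_move_to x
  obtain ⟨g', hg', hgx'⟩ := exists_move_to x'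
  obtain ⟨k, hk, hka, hky⟩ := exists_move (x := g y) (y := g' y')
    (fun h ↦ hxy (g.injective (hgx.trans h.symm))) (fun h ↦ hxy' (g'.injective (hgx'.trans h.symm)))
  refine ⟨⟨g'⁻¹ * k * g, mul_mem (mul_mem (inv_mem hg') hk) hg⟩, ?_, ?_⟩
  · change g'⁻¹ (k (g x)) = x'
    rw [hgx, hka, Perm.inv_eq_iff_eq, hgx']
  · change g'⁻¹ (k (g y)) = y'
    rw [hky, Perm.inv_eq_iff_eq]

variable [Fintype α] [DecidableEq α]

theorem eq_top_of_isCycle_of_isThreeCycle_mem {K : Subgroup (alternatingGroup α)}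
    {a : α} {σ τ ρ : alternatingGroup α} (hσK : σ ∈ K) (hτK : τ ∈ K) (hρK : ρ ∈ K)
    (hσ : (σ : Perm α).IsCycle) (ha : ∀ x, (σ : Perm α) x = x ↔ x = a) (hτ : (τ : Perm α) a ≠ a)
    (hρ : (ρ : Perm α).IsThreeCycle) : K = ⊤ := by
  let G : Subgroup (Perm α) := K.map (alternatingGroup α).subtype
  have coe_mem {x : alternatingGroup α} (hx : x ∈ K) : (x : Perm α) ∈ G :=
    Subgroup.mem_map_of_mem _ hx
  have hG : IsPreprimitive G α :=
    isPreprimitive_of_isCycle_of_apply_ne (coe_mem hσK) (coe_mem hτK) hσ ha hτ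
  have hle : alternatingGroup α ≤ G :=
    Perm.alternatingGroup_le_of_isPreprimitive_of_isThreeCycle_mem hG hρ (coe_mem hρK)
  refine eq_top_iff.2 fun x _ ↦ ?_
  obtain ⟨z, hz, hzx⟩ := hle x.2
  exact Subtype.ext hzx ▸ hz

theorem exists_injective_hom_alternatingGroup (G : Type*) {X : Type*} [Group G] [IsSimpleGroup G]
    [Group.IsPerfect G] [MulAction G X] [IsPretransitive G X] [Nontrivial X] (e : X ≃ α) :
    ∃ f : G →* alternatingGroup α, Function.Injective f ∧
      ∀ g x, (f g : Perm α) (e x) = e (g • x) := by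
  let f : G →* Perm α := e.permCongrHom.toMonoidHom.comp (toPermHom G X)
  have hf (g : G) (x : X) : f g (e x) = e (g • x) := by simp [f]
  have hsign (g : G) : f g ∈ alternatingGroup α :=
    Abelianization.commutator_subset_ker (Perm.sign.comp f) Group.IsPerfect.mem_commutator
  refine ⟨f.codRestrict _ hsign, ?_, hf⟩
  rw [MonoidHom.injective_codRestrict, ← MonoidHom.ker_eq_bot_iff]
  refine (f.normal_ker.eq_bot_or_eq_top).resolve_right fun hker ↦ ?_
  obtain ⟨x, y, hxy⟩ := exists_pair_ne X
  obtain ⟨g, rfl⟩ := exists_smul_eq G x y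
  have hg : f g = 1 := MonoidHom.mem_ker.1 (hker ▸ Subgroup.mem_top g)
  exact hxy (e.injective (by rw [← hf, hg, Perm.one_apply]))

theorem conjNormal_alternatingGroup_injective (hα : 5 ≤ Nat.card α) :
    Function.Injective (MulAut.conjNormal : Perm α →* MulAut (alternatingGroup α)) := by
  rw [← MonoidHom.ker_eq_bot_iff]
  by_contra hker
  have hle := Perm.alternatingGroup_le_of_normal hα (Subgroup.nontrivial_iff_ne_bot _ |>.2 hker)
  have hcomm : IsMulCommutative (alternatingGroup α) := by
    refine ⟨⟨fun a b ↦ ?_⟩⟩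
    have hab := congrArg Subtype.val (DFunLike.congr_fun (MonoidHom.mem_ker.1 (hle a.2)) b)
    rw [MulAut.conjNormal_apply] at hab
    exact Subtype.ext (mul_inv_eq_iff_eq_mul.1 hab)
  have := alternatingGroup.isMulCommutative_iff_card_le_three.1 hcomm
  lia

theorem not_surjective_conjNormal_of_isPretransitive (hα : 5 ≤ Nat.card α)
    {K : Subgroup (alternatingGroup α)} [IsPretransitive K α] (hK : K.index = Nat.card α) :
    ¬ Function.Surjective (MulAut.conjNormal : Perm α →* MulAut (alternatingGroup α)) := by
  intro hsurj
  have := alternatingGroup.isSimpleGroup hα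
  have : Group.IsPerfect (alternatingGroup α) :=
    ⟨commutator_alternatingGroup_eq_top hα⟩
  have : Nontrivial (alternatingGroup α ⧸ K) :=
    Finite.one_lt_card_iff_nontrivial.1 (by rw [← Subgroup.index_eq_card]; lia)
  have : Nontrivial α := Finite.one_lt_card_iff_nontrivial.1 (by lia)
  obtain ⟨e⟩ : Nonempty (alternatingGroup α ⧸ K ≃ α) := Finite.card_eq.1 hK
  obtain ⟨f, hf, hfe⟩ := exists_injective_hom_alternatingGroup (alternatingGroup α) e
  obtain ⟨σ, hσ⟩ := hsurj (MulEquiv.ofBijective f (Finite.injective_iff_bijective.1 hf))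
  have hfσ (k : alternatingGroup α) : (f k : Perm α) = σ * k * σ⁻¹ := by
    rw [← MulAut.conjNormal_apply, hσ, MulEquiv.ofBijective_apply]
  let a : α := σ⁻¹ (e (1 : alternatingGroup α))
  have hfix (k : K) : k • a = a := by
    have hk : (f k : Perm α) (e (1 : alternatingGroup α)) = e (1 : alternatingGroup α) := by
      rw [hfe]
      exact congrArg e (QuotientGroup.eq.2 (by simp))
    rw [hfσ, Perm.mul_apply, Perm.mul_apply] at hk
    exact Perm.eq_inv_iff_eq.2 hk
  obtain ⟨b, hb⟩ := exists_ne a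
  obtain ⟨k, rfl⟩ := exists_smul_eq K a b
  exact hb (hfix k)

end Alternating

namespace AlternatingSix

theorem card_alternatingGroup_five : Nat.card (alternatingGroup (Fin 5)) = 60 := by
  rw [nat_card_alternatingGroup, Nat.card_fin]
  rfl

theorem card_sylow_five_alternatingGroup :
    Nat.card (Sylow 5 (alternatingGroup (Fin 5))) = 6 := by
  have : Fact (Nat.Prime 5) := ⟨Nat.prime_five⟩
  have hcard := card_alternatingGroup_five
  let P : Sylow 5 (alternatingGroup (Fin 5)) := default
  have hP : Nat.card P = 5 := by
    rw [P.card_eq_multiplicity, hcard, show (60 : ℕ).factorization 5 = 1 by decide +kernel, pow_one]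
  have hdvd : Nat.card (Sylow 5 (alternatingGroup (Fin 5))) ∣ 12 := by
    have hindex := (P : Subgroup (alternatingGroup (Fin 5))).card_mul_index
    rw [hP, hcard] at hindex
    exact P.card_dvd_index.trans (Dvd.intro_left 1 (by lia))
  have hne : Nat.card (Sylow 5 (alternatingGroup (Fin 5))) ≠ 1 := by
    intro h
    have := (Nat.card_eq_one_iff_unique.1 h).1
    have := alternatingGroup.isSimpleGroup (α := Fin 5) (by simp)
    rcases P.normal_of_subsingleton.eq_bot_or_eq_top with h | h
    · simp [h] at hP
    · rw [h, Subgroup.card_top, hcard] at hP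
      lia
  have hmod := card_sylow_modEq_one 5 (alternatingGroup (Fin 5))
  have hle := Nat.le_of_dvd (by lia) hdvd
  unfold Nat.ModEq at hmod
  interval_cases Nat.card (Sylow 5 (alternatingGroup (Fin 5))) <;> lia

theorem exists_isPretransitive_index_eq_six :
    ∃ K : Subgroup (alternatingGroup (Fin 6)), IsPretransitive K (Fin 6) ∧ K.index = 6 := by
  have : Fact (Nat.Prime 5) := ⟨Nat.prime_five⟩
  have hfive : 5 ≤ Nat.card (Fin 5) := by simp
  have := alternatingGroup.isSimpleGroup hfive
  have : Group.IsPerfect (alternatingGroup (Fin 5)) := ⟨commutator_alternatingGroup_eq_top hfive⟩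
  have hsix := card_sylow_five_alternatingGroup
  have : Nontrivial (Sylow 5 (alternatingGroup (Fin 5))) :=
    Finite.one_lt_card_iff_nontrivial.1 (by lia)
  obtain ⟨e⟩ : Nonempty (Sylow 5 (alternatingGroup (Fin 5)) ≃ Fin 6) :=
    Finite.card_eq.1 (by rw [hsix, Nat.card_fin])
  obtain ⟨f, hf, hfe⟩ := exists_injective_hom_alternatingGroup (alternatingGroup (Fin 5)) e
  refine ⟨f.range, ⟨fun a b ↦ ?_⟩, ?_⟩
  · obtain ⟨g, hg⟩ := exists_smul_eq (alternatingGroup (Fin 5)) (e.symm a) (e.symm b)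
    refine ⟨⟨f g, g, rfl⟩, ?_⟩
    have := hfe g (e.symm a)
    rwa [hg, e.apply_symm_apply, e.apply_symm_apply] at this
  · have hrange : Nat.card f.range = 60 := by
      rw [← Nat.card_congr (f.ofInjective hf).toEquiv, card_alternatingGroup_five]
    have hindex := f.range.card_mul_index
    rw [hrange, nat_card_alternatingGroup, Nat.card_fin, show Nat.factorial 6 = 720 from rfl]
      at hindex
    lia

theorem le_card_mulAut_alternatingGroup_six :
    1440 ≤ Nat.card (MulAut (alternatingGroup (Fin 6))) := by
  obtain ⟨K, hK, hindex⟩ := exists_isPretransitive_index_eq_six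
  have hsix : 5 ≤ Nat.card (Fin 6) := by simp
  let c : Perm (Fin 6) →* MulAut (alternatingGroup (Fin 6)) := MulAut.conjNormal
  have hcard : Nat.card c.range = 720 := by
    rw [← Nat.card_congr (c.ofInjective (conjNormal_alternatingGroup_injective hsix)).toEquiv,
      Nat.card_perm, Nat.card_fin]
    rfl
  have hrange : c.range.index ≠ 1 := by
    rw [Ne, Subgroup.index_eq_one, MonoidHom.range_eq_top]
    exact not_surjective_conjNormal_of_isPretransitive hsix (by rw [hindex, Nat.card_fin])
  have := c.range.index_ne_zero_of_finite
  rw [← c.range.card_mul_index, hcard]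
  lia

local notation "A₆" => alternatingGroup (Fin 6)

/-- The involution whose stabilizer in `Aut A₆` is shown to be a Sylow `2`-subgroup. -/
def t : A₆ :=
  ⟨c[0, 1] * c[2, 3], Perm.mem_alternatingGroup.2 (by decide)⟩

/-- An element of order four generating `A₆` together with `t`, chosen so that `t * y` is a
`5`-cycle. -/
def y : A₆ :=
  ⟨c[0, 1, 2, 4] * c[3, 5], Perm.mem_alternatingGroup.2 (by decide)⟩

theorem coe_t_mul_y : ((t * y : A₆) : Perm (Fin 6)) = c[1, 3, 5, 2, 4] := by decide +kernel

theorem coe_commutator : ((⁅t, y⁻¹ * t * y ^ 2⁆ : A₆) : Perm (Fin 6)) = c[2, 5, 3] := by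
  decide +kernel

theorem closure_t_y : Subgroup.closure {t, y} = ⊤ := by
  have ht : t ∈ Subgroup.closure {t, y} := Subgroup.subset_closure (by simp)
  have hy : y ∈ Subgroup.closure {t, y} := Subgroup.subset_closure (by simp)
  have hu : y⁻¹ * t * y ^ 2 ∈ Subgroup.closure {t, y} :=
    mul_mem (mul_mem (inv_mem hy) ht) (pow_mem hy 2)
  have hcommutator : ⁅t, y⁻¹ * t * y ^ 2⁆ ∈ Subgroup.closure {t, y} :=
    mul_mem (mul_mem (mul_mem ht hu) (inv_mem ht)) (inv_mem hu)
  refine eq_top_of_isCycle_of_isThreeCycle_mem (a := 0) (mul_mem ht hy) hy hcommutator ?_ ?_ ?_ ?_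
  · rw [coe_t_mul_y]
    exact List.isCycle_formPerm (l := [1, 3, 5, 2, 4]) (by decide) (by decide)
  · rw [coe_t_mul_y]
    decide
  · decide
  · rw [coe_commutator, ← card_support_eq_three_iff]
    decide

theorem t_mem_involutions : t ∈ involutions A₆ := mem_involutions.2 (by decide)

theorem card_involutions_split :
    (involutions A₆).card = 45 ∧
      Finset.card {x ∈ involutions A₆ | (t * x) ^ 5 = 1} = 17 ∧
      Finset.card {x ∈ involutions A₆ | ¬ (t * x) ^ 5 = 1} = 28 := by
  decide +kernel

theorem card_order_four_mul_pow_five :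
    Finset.card {x : A₆ | x ^ 4 = 1 ∧ x ^ 2 ≠ 1 ∧ (t * x) ^ 5 = 1} = 32 := by
  decide +kernel

theorem index_stabilizer_t_le : (stabilizer (MulAut A₆) t).index ≤ 45 := by
  have horbit : orbit (MulAut A₆) t ⊆ involutions A₆ := by
    rintro _ ⟨f, rfl⟩
    exact mulAut_smul_mem_involutions f t_mem_involutions
  rw [index_stabilizer, ← card_involutions_split.1, ← Set.ncard_coe_finset]
  exact Set.ncard_le_ncard horbit

theorem card_stabilizer_t_le : Nat.card (stabilizer (MulAut A₆) t) ≤ 32 := by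
  rw [← card_order_four_mul_pow_five]
  refine card_stabilizer_le_of_inf_stabilizer_eq_bot _ (fun f hf ↦ ?_)
    (stabilizer_mulAut_inf_eq_bot closure_t_y)
  have hy : y ^ 4 = 1 ∧ y ^ 2 ≠ 1 ∧ (t * y) ^ 5 = 1 := by decide +kernel
  rw [Finset.mem_filter_univ, mul_smul_pow_eq_one_iff hf]
  simpa only [MulAut.smul_def, ← map_pow, EmbeddingLike.map_eq_one_iff, Ne] using hy

theorem card_stabilizer_t_and_index :
    Nat.card (stabilizer (MulAut A₆) t) = 32 ∧ (stabilizer (MulAut A₆) t).index = 45 := by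
  have hmul := (stabilizer (MulAut A₆) t).card_mul_index
  have hle := le_card_mulAut_alternatingGroup_six
  have hcard := card_stabilizer_t_le
  have hindex := index_stabilizer_t_le
  constructor <;> nlinarith

theorem exists_sylow_eq_stabilizer_t :
    ∃ P : Sylow 2 (MulAut A₆), (P : Subgroup (MulAut A₆)) = stabilizer (MulAut A₆) t := by
  obtain ⟨hcard, hindex⟩ := card_stabilizer_t_and_index
  have hp : IsPGroup 2 (stabilizer (MulAut A₆) t) := IsPGroup.of_card (n := 5) hcard
  exact ⟨hp.toSylow (by rw [hindex]; decide), hp.toSylow_coe _⟩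

theorem card_involutions_mul_pow_five_iff_le (p : Prop) [Decidable p] :
    Finset.card {x ∈ involutions A₆ | (t * x) ^ 5 = 1 ↔ p} ≤ 28 := by
  obtain ⟨-, heq, hne⟩ := card_involutions_split
  by_cases hp : p
  · simp only [hp, iff_true, heq, Nat.reduceLeDiff]
  · simp only [hp, iff_false, hne, le_refl]

theorem stabilizer_t_inf_stabilizer_ne_bot {s : A₆} (hs : s ∈ involutions A₆) :
    stabilizer (MulAut A₆) t ⊓ stabilizer (MulAut A₆) s ≠ ⊥ := by
  intro hbot
  have hle := card_stabilizer_le_of_inf_stabilizer_eq_bot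
    {x ∈ involutions A₆ | (t * x) ^ 5 = 1 ↔ (t * s) ^ 5 = 1} (fun f hf ↦ Finset.mem_filter.2
      ⟨mulAut_smul_mem_involutions f hs, mul_smul_pow_eq_one_iff hf s 5⟩) hbot
  rw [card_stabilizer_t_and_index.1] at hle
  exact absurd (hle.trans (card_involutions_mul_pow_five_iff_le _)) (by decide)

end AlternatingSix

/-- If `H` is a Sylow `2`-subgroup of `Aut(A₆) ≅ L₂(9).2²`, then `H ∩ gHg⁻¹` is
nontrivial for every `g`. -/
theorem stmt10 (H : Sylow 2 (MulAut ↥(alternatingGroup (Fin 6))))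
    (g : MulAut ↥(alternatingGroup (Fin 6))) :
    (H : Subgroup (MulAut ↥(alternatingGroup (Fin 6)))) ⊓
      (H : Subgroup (MulAut ↥(alternatingGroup (Fin 6)))).map
        (MulAut.conj g).toMonoidHom ≠ ⊥ := by
  obtain ⟨P, hP⟩ := AlternatingSix.exists_sylow_eq_stabilizer_t
  refine sylow_inf_map_conj_ne_bot_of_eq_stabilizer hP (fun k ↦ ?_) H g
  apply AlternatingSix.stabilizer_t_inf_stabilizer_ne_bot
  exact mulAut_smul_mem_involutions k AlternatingSix.t_mem_involutions
end

section
/- Let q ≥ 7 be a Mersenne prime, i.e. a prime of the form q = 2^k − 1, let F_q be the field with q elements, and let G = PGL_2(F_q) be the quotient of GL_2(F_q) by its center. Let H be a Sylow 2-subgroup of G. Then for every g ∈ G, the intersection H ∩ gHg⁻¹ is a nontrivial subgroup of G. -/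
/-!
Let `S` and `T` be elements of `GL₂(F)` with square `-1`, where `-1` is not a square in `F`. Then
`T` makes `F²` a line over the field `F(√-1)`, on which a matrix that commutes or anticommutes with
`T` is linear or semilinear, hence zero or invertible. The commutator `ST - TS` anticommutes with
`S` and `T`, so that, unless `S` and `T` commute, it gives a nontrivial element of `PGL₂(F)`
centralizing both of them.

If moreover `F` has `q` elements, then every element of the centralizer of `T` in `PGL₂(F)` has its
square in `F(√-1)ˣ / Fˣ`, a group of order `q + 1`. When `q + 1` is a power of two, the centralizer
is thus a `2`-group, every Sylow `2`-subgroup contains the centralizer of some such `T`, and any two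
Sylow `2`-subgroups intersect nontrivially.
-/

open Matrix

open scoped MatrixGroups

lemma not_isSquare_neg_one_of_card_add_one_eq_two_pow {F : Type*} [Field F] [Fintype F] {k : ℕ}
    (hk : Fintype.card F + 1 = 2 ^ k) : ¬ IsSquare (-1 : F) := by
  have hcard : 2 ≤ Fintype.card F := Fintype.one_lt_card
  have hk2 : 2 ≤ k := by
    by_contra! hlt
    interval_cases k <;> lia
  obtain ⟨m, hm⟩ : 2 ^ 2 ∣ 2 ^ k := pow_dvd_pow 2 hk2
  rw [FiniteField.isSquare_neg_one_iff, not_not]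
  lia

section Ring

variable {R : Type*}

lemma pow_eq_neg_of_sq_eq_neg_one [Monoid R] [HasDistribNeg R] {t : R} (ht : t ^ 2 = -1) {n : ℕ}
    (hn : n % 4 = 3) : t ^ n = -t := by
  obtain ⟨m, rfl⟩ : ∃ m, n = 2 * (2 * m + 1) + 1 := ⟨n / 4, by lia⟩
  rw [pow_succ, pow_mul, ht, Odd.neg_one_pow ⟨m, rfl⟩, neg_one_mul]

lemma semiconjBy_lie_left_neg [Ring R] {x y : R} (h : Commute (x ^ 2) y) :
    SemiconjBy ⁅x, y⁆ x (-x) := by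
  have h' : x * x * y = y * (x * x) := by simpa only [sq] using h.eq
  simp only [SemiconjBy, Ring.lie_def, sub_mul, neg_mul, mul_sub, ← mul_assoc, h']
  abel

lemma semiconjBy_lie_right_neg [Ring R] {x y : R} (h : Commute x (y ^ 2)) :
    SemiconjBy ⁅x, y⁆ y (-y) := by
  rw [Ring.lie_def, ← neg_sub, ← Ring.lie_def]
  exact (semiconjBy_lie_left_neg h.symm).neg_left

lemma smul_one_add_smul_pow_card_add_one {F : Type*} [Field F] [Fintype F] [Ring R] [Nontrivial R]
    [Algebra F R] (hF : ¬ IsSquare (-1 : F)) {t : R} (ht : t ^ 2 = -1) (a b : F) :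
    (a • (1 : R) + b • t) ^ (Fintype.card F + 1) = (a ^ 2 + b ^ 2) • 1 := by
  have hcard : Fintype.card F % 4 = 3 := by simpa [FiniteField.isSquare_neg_one_iff] using hF
  have hcomm : Commute (a • (1 : R)) (b • t) := ((Commute.one_left t).smul_left a).smul_right b
  have frobenius : (a • (1 : R) + b • t) ^ Fintype.card F = a • 1 - b • t := by
    obtain ⟨p, hchar, n, hp, hpn⟩ := FiniteField.card' F
    have : Fact p.Prime := ⟨hp⟩
    have : CharP R p := charP_of_injective_algebraMap (algebraMap F R).injective p
    rw [hpn, add_pow_char_pow_of_commute _ _ hcomm, ← hpn, smul_pow, smul_pow,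
      FiniteField.pow_card, FiniteField.pow_card, one_pow,
      pow_eq_neg_of_sq_eq_neg_one ht hcard, smul_neg, sub_eq_add_neg]
  calc (a • (1 : R) + b • t) ^ (Fintype.card F + 1)
      = (a • 1 + b • t) * (a • 1 - b • t) := by rw [pow_succ', frobenius]
    _ = (a • 1) ^ 2 - (b • t) ^ 2 := (Commute.sq_sub_sq hcomm).symm
    _ = (a ^ 2 + b ^ 2) • 1 := by
      rw [smul_pow, smul_pow, ht, one_pow, smul_neg, sub_neg_eq_add, add_smul]

end Ring

section Matrix

variable {F : Type*} [Field F] {A M N T : Matrix (Fin 2) (Fin 2) F}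

lemma exists_eq_smul_add_smul_mulVec (hF : ¬ IsSquare (-1 : F)) (hT : T ^ 2 = -1)
    {v : Fin 2 → F} (hv : v ≠ 0) (w : Fin 2 → F) : ∃ a b : F, a • v + b • T *ᵥ v = w := by
  have hli : LinearIndependent F ![v, T *ᵥ v] := by
    rw [LinearIndependent.pair_iff' hv]
    intro c hc
    have hcc : (c * c) • v = (-1 : F) • v := by
      calc (c * c) • v = T *ᵥ (T *ᵥ v) := by rw [← hc, mulVec_smul, ← hc, smul_smul]
        _ = (-1 : F) • v := by rw [mulVec_mulVec, ← sq, hT, neg_mulVec, one_mulVec, neg_one_smul]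
    exact hF ⟨c, (smul_left_injective F hv hcc).symm⟩
  have hspan := hli.span_eq_top_of_card_eq_finrank (by simp)
  rw [range_cons_cons_empty] at hspan
  exact Submodule.mem_span_pair.mp (hspan ▸ Submodule.mem_top)

lemma eq_zero_of_semiconjBy_of_mulVec_eq_zero (hF : ¬ IsSquare (-1 : F)) (hT : T ^ 2 = -1)
    (hM : SemiconjBy M T N) {v : Fin 2 → F} (hv : v ≠ 0) (hMv : M *ᵥ v = 0) : M = 0 := by
  have hMTv : M *ᵥ (T *ᵥ v) = 0 := by rw [mulVec_mulVec, hM.eq, ← mulVec_mulVec, hMv, mulVec_zero]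
  refine ext_of_mulVec_single fun i => ?_
  obtain ⟨a, b, hab⟩ := exists_eq_smul_add_smul_mulVec hF hT hv (Pi.single i 1)
  rw [← hab, mulVec_add, mulVec_smul, mulVec_smul, hMv, hMTv, zero_mulVec, smul_zero, smul_zero,
    add_zero]

lemma isUnit_of_semiconjBy (hF : ¬ IsSquare (-1 : F)) (hT : T ^ 2 = -1) (hM : SemiconjBy M T N)
    (hM0 : M ≠ 0) : IsUnit M := by
  rw [isUnit_iff_isUnit_det, isUnit_iff_ne_zero]
  intro hdet
  obtain ⟨v, hv, hMv⟩ := exists_mulVec_eq_zero_iff.mpr hdet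
  exact hM0 (eq_zero_of_semiconjBy_of_mulVec_eq_zero hF hT hM hv hMv)

lemma isUnit_lie_of_not_commute (hF : ¬ IsSquare (-1 : F)) (hT : T ^ 2 = -1)
    (hTM : ¬ Commute T M) : IsUnit ⁅T, M⁆ :=
  isUnit_of_semiconjBy hF hT (semiconjBy_lie_left_neg (hT ▸ Commute.neg_one_left M))
    (mt commute_iff_lie_eq.mpr hTM)

lemma exists_eq_smul_one_add_smul (hF : ¬ IsSquare (-1 : F)) (hT : T ^ 2 = -1)
    (hA : Commute A T) : ∃ a b : F, A = a • 1 + b • T := by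
  have he : (Pi.single 0 1 : Fin 2 → F) ≠ 0 := by simp
  obtain ⟨a, b, hab⟩ := exists_eq_smul_add_smul_mulVec hF hT he (A *ᵥ Pi.single 0 1)
  have hcomm : Commute (A - (a • 1 + b • T)) T :=
    hA.sub_left (((Commute.one_left T).smul_left a).add_left ((Commute.refl T).smul_left b))
  refine ⟨a, b, sub_eq_zero.mp (eq_zero_of_semiconjBy_of_mulVec_eq_zero hF hT hcomm he ?_)⟩
  rw [sub_mulVec, add_mulVec, smul_mulVec, smul_mulVec, one_mulVec, hab, sub_self]

end Matrix

lemma exists_GL_two_sq_eq_neg_one (R : Type*) [CommRing R] : ∃ J : GL (Fin 2) R, J ^ 2 = -1 := by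
  refine ⟨GeneralLinearGroup.mk'' !![0, -1; 1, 0] (by simp), Units.ext ?_⟩
  rw [Units.val_pow_eq_pow_val, Units.val_neg, Units.val_one]
  change !![0, -1; 1, 0] ^ 2 = (-1 : Matrix (Fin 2) (Fin 2) R)
  simp [sq, one_fin_two]

section ProjGenLinGroup

open Matrix.ProjGenLinGroup

lemma commute_mk_iff {R : Type*} [CommRing R] [IsDomain R] {A B : GL (Fin 2) R} :
    Commute (mk A) (mk B) ↔ Commute A B ∨ SemiconjBy A B (-B) := by
  have hiff : Commute (mk A) (mk B) ↔ ∃ u : Rˣ, A * B * .scalar (Fin 2) u = B * A := by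
    rw [commute_iff_eq, ← map_mul, ← map_mul, mk_eq_mk_iff]
  have hneg : GeneralLinearGroup.scalar (Fin 2) (-1 : Rˣ) = -1 :=
    Units.ext (by simp [← smul_one_eq_diagonal])
  rw [hiff]
  constructor
  · rintro ⟨u, hu⟩
    have husq : u ^ 2 = 1 ^ 2 := by
      simpa [mul_comm] using congrArg GeneralLinearGroup.det hu
    rcases Units.eq_or_eq_neg_of_sq_eq_sq u 1 husq with rfl | rfl
    · exact .inl (by simpa [commute_iff_eq] using hu)
    · refine .inr ?_
      rw [SemiconjBy, neg_mul, ← hu, hneg, mul_neg_one, neg_neg]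
  · rintro (h | h)
    · exact ⟨1, by simpa using h.eq⟩
    · refine ⟨-1, ?_⟩
      rw [hneg, mul_neg_one, h.eq, neg_mul, neg_neg]

section

variable {n R : Type*} [Fintype n] [DecidableEq n] [Nonempty n] [CommRing R]

lemma mk_ne_one_of_sq_eq_neg_one (hR : ¬ IsSquare (-1 : R)) {T : GL n R} (hT : T ^ 2 = -1) :
    mk T ≠ 1 := by
  rw [Ne, mk_eq_one, GeneralLinearGroup.mem_center_iff_val_mem_range_scalar]
  rintro ⟨c, hc⟩
  have hcc : scalar n (c * c) = scalar n (-1) := by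
    rw [map_mul, hc, ← Units.val_mul, ← sq, hT, map_neg, map_one, Units.val_neg, Units.val_one]
  exact hR ⟨c, (scalar_inj.mp hcc).symm⟩

lemma mk_ne_one_of_semiconjBy_neg (h2 : (2 : R) ≠ 0) {U T : GL n R}
    (hU : SemiconjBy U T (-T)) : mk U ≠ 1 := by
  rw [Ne, mk_eq_one, Subgroup.mem_center_iff]
  intro hcenter
  have hone : (1 : GL n R) = -1 := mul_right_cancel (b := T * U) <| by
    calc 1 * (T * U) = U * T := by rw [one_mul, hcenter]
      _ = -1 * (T * U) := by rw [hU.eq, neg_mul, neg_one_mul]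
  let i := Classical.arbitrary n
  have hentry : (1 : R) = -1 := by simpa using congrArg (fun A : GL n R => A i i) hone
  exact h2 (by linear_combination hentry)

end

variable {F : Type*} [Field F]

lemma exists_ne_one_commute_mk_of_sq_eq_neg_one (hF : ¬ IsSquare (-1 : F)) {S T : GL (Fin 2) F}
    (hS : S ^ 2 = -1) (hT : T ^ 2 = -1) :
    ∃ u : PGL(2, F), u ≠ 1 ∧ Commute u (mk S) ∧ Commute u (mk T) := by
  by_cases hST : Commute S T
  · exact ⟨mk S, mk_ne_one_of_sq_eq_neg_one hF hS, Commute.refl _, hST.map mk⟩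
  have hS' : (S : Matrix (Fin 2) (Fin 2) F) ^ 2 = -1 := by simpa using congrArg Units.val hS
  have hT' : (T : Matrix (Fin 2) (Fin 2) F) ^ 2 = -1 := by simpa using congrArg Units.val hT
  obtain ⟨U, hU⟩ := isUnit_lie_of_not_commute hF hS' (mt Commute.units_val_iff.mp hST)
  have hUS : SemiconjBy U S (-S) := by
    rw [← SemiconjBy.units_val_iff, hU, Units.val_neg]
    exact semiconjBy_lie_left_neg (hS' ▸ Commute.neg_one_left _)
  have hUT : SemiconjBy U T (-T) := by
    rw [← SemiconjBy.units_val_iff, hU, Units.val_neg]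
    exact semiconjBy_lie_right_neg (hT' ▸ Commute.neg_one_right _)
  have h2 : (2 : F) ≠ 0 := fun h => hF ⟨1, by linear_combination -h⟩
  exact ⟨mk U, mk_ne_one_of_semiconjBy_neg h2 hUS, commute_mk_iff.mpr (.inr hUS),
    commute_mk_iff.mpr (.inr hUT)⟩

lemma isPGroup_two_centralizer_mk [Fintype F] {k : ℕ} (hk : Fintype.card F + 1 = 2 ^ k)
    {T : GL (Fin 2) F} (hT : T ^ 2 = -1) : IsPGroup 2 (Subgroup.centralizer {mk T}) := by
  have hF : ¬ IsSquare (-1 : F) := not_isSquare_neg_one_of_card_add_one_eq_two_pow hk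
  rintro ⟨g, hg⟩
  obtain ⟨A, rfl⟩ := mk_surjective g
  have hcomm : Commute (A ^ 2) T := by
    rcases commute_mk_iff.mp (Subgroup.mem_centralizer_singleton_iff.mp hg) with h | h
    · exact h.pow_left 2
    · have hmul : SemiconjBy (A * A) T T := by simpa only [neg_neg] using h.neg_right.mul_left h
      exact sq A ▸ hmul
  have hT' : (T : Matrix (Fin 2) (Fin 2) F) ^ 2 = -1 := by simpa using congrArg Units.val hT
  obtain ⟨a, b, hab⟩ := exists_eq_smul_one_add_smul hF hT' hcomm.units_val
  have hscalar : ((A ^ 2) ^ 2 ^ k : GL (Fin 2) F) ∈ Subgroup.center (GL (Fin 2) F) := by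
    rw [GeneralLinearGroup.mem_center_iff_val_mem_range_scalar]
    refine ⟨a ^ 2 + b ^ 2, ?_⟩
    rw [Units.val_pow_eq_pow_val, hab, ← hk, smul_one_add_smul_pow_card_add_one hF hT',
      scalar_apply, smul_one_eq_diagonal]
  refine ⟨k + 1, Subtype.ext ?_⟩
  rw [← mk_eq_one, ← pow_mul, ← pow_succ', map_pow] at hscalar
  exact hscalar

end ProjGenLinGroup

lemma exists_centralizer_conj_le_sylow {G : Type*} [Group G] {p : ℕ} [Fact p.Prime]
    [Finite (Sylow p G)] {t : G} (ht : IsPGroup p (Subgroup.centralizer {t})) (P : Sylow p G) :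
    ∃ x : G, Subgroup.centralizer {x * t * x⁻¹} ≤ P := by
  obtain ⟨Q, hQ⟩ := ht.exists_le_sylow
  obtain ⟨x, rfl⟩ := MulAction.exists_smul_eq G Q P
  refine ⟨x, fun u hu => ?_⟩
  rw [Sylow.coe_subgroup_smul, Subgroup.mem_pointwise_smul_iff_inv_smul_mem]
  refine hQ (Subgroup.mem_centralizer_singleton_iff.mpr ?_)
  have hu : u * (x * t * x⁻¹) = x * t * x⁻¹ * u := Subgroup.mem_centralizer_singleton_iff.mp hu
  rw [← map_inv, MulAut.smul_def, MulAut.conj_apply, inv_inv]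
  calc x⁻¹ * u * x * t = x⁻¹ * (u * (x * t * x⁻¹)) * x := by group
    _ = t * (x⁻¹ * u * x) := by rw [hu]; group

theorem stmt11_general {F : Type*} [Field F] [Fintype F] {k : ℕ} (hk : Fintype.card F + 1 = 2 ^ k)
    (P Q : Sylow 2 PGL(2, F)) : (P : Subgroup PGL(2, F)) ⊓ Q ≠ ⊥ := by
  have hF : ¬ IsSquare (-1 : F) := not_isSquare_neg_one_of_card_add_one_eq_two_pow hk
  have : Finite PGL(2, F) := Quotient.finite _
  obtain ⟨J, hJ⟩ := exists_GL_two_sq_eq_neg_one F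
  have hC := isPGroup_two_centralizer_mk hk hJ
  obtain ⟨x, hx⟩ := exists_centralizer_conj_le_sylow hC P
  obtain ⟨y, hy⟩ := exists_centralizer_conj_le_sylow hC Q
  obtain ⟨X, rfl⟩ := ProjGenLinGroup.mk_surjective x
  obtain ⟨Y, rfl⟩ := ProjGenLinGroup.mk_surjective y
  obtain ⟨u, hu, huX, huY⟩ := exists_ne_one_commute_mk_of_sq_eq_neg_one hF
    (S := X * J * X⁻¹) (T := Y * J * Y⁻¹) (by simp [conj_pow, hJ]) (by simp [conj_pow, hJ])
  simp only [map_mul, map_inv] at huX huY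
  have huP : u ∈ P := hx (Subgroup.mem_centralizer_singleton_iff.mpr huX)
  have huQ : u ∈ Q := hy (Subgroup.mem_centralizer_singleton_iff.mpr huY)
  exact fun hbot => hu (Subgroup.mem_bot.mp (hbot ▸ Subgroup.mem_inf.mpr ⟨huP, huQ⟩))

/-- If `q ≥ 7` is a Mersenne prime, `F` the field with `q` elements, and `H` a Sylow
`2`-subgroup of `PGL₂(F) = GL₂(F)/Z(GL₂(F))`, then `H ∩ gHg⁻¹` is nontrivial for
every `g`. -/
theorem stmt11 (q : ℕ) (hq : q.Prime) (hmer : ∃ k : ℕ, q = 2 ^ k - 1) (h7 : 7 ≤ q)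
    (F : Type*) [Field F] [Fintype F] (hF : Fintype.card F = q)
    (H : Sylow 2 (Matrix.GeneralLinearGroup (Fin 2) F ⧸
      Subgroup.center (Matrix.GeneralLinearGroup (Fin 2) F)))
    (g : Matrix.GeneralLinearGroup (Fin 2) F ⧸
      Subgroup.center (Matrix.GeneralLinearGroup (Fin 2) F)) :
    (H : Subgroup _) ⊓ (H : Subgroup _).map (MulAut.conj g).toMonoidHom ≠ ⊥ := by
  obtain ⟨k, rfl⟩ := hmer
  exact stmt11_general (F := F) (k := k) (by omega) H (g • H)
end

section
/- Let n ≥ 4, and let q be either 9, or a Fermat prime (a prime of the form 2^k + 1), or a Mersenne prime (a prime of the form 2^k − 1). Let F_q be the field with q elements, let G = PGL_n(F_q) be the quotient of GL_n(F_q) by its center, and let H be a Sylow 2-subgroup of G. Then there exists g ∈ G such that H ∩ gHg⁻¹ is the trivial subgroup. -/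
/-!
Every `2`-subgroup of `PGL_n(F)` is conjugate into the image of any subgroup `K` of odd index in
`GL_n(F)`, so it is enough to find such a `K`, containing the center, and a `g` for which
`K ∩ gKg⁻¹` is central.

In characteristic `2` let `K` be generated by the unitriangular matrices and the scalars, and let
`g` be the antidiagonal permutation matrix: `gKg⁻¹` is lower triangular.

For odd `q = |F|` a comparison of `2`-adic valuations shows that `K = (B ≀ S_m) × GL(R)`, acting on
`W^m × R`, has odd index for `W = F`, `B = GL(W)`, `R = 0` if `q ≡ 1 mod 4`, and for `W = F²`, `B`
the group of similitudes of `x² + y²`, `dim R ≤ 1` if `q ≡ 3 mod 4`. Let `g` be block upper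
triangular, with equal blocks `U` on the diagonal and equal nonzero blocks `E` above it. An identity
`x g = g y` with `x, y ∈ K` forces the permutation parts of `x` and `y` to preserve the triangular
zero pattern of `g`, hence to be trivial. The diagonal blocks of `x` are then conjugate under `U` to
those of `y` and compatible with `E`; for `U` a shear and `E` of rank one the only similitudes with
this property are the scalars.
-/

section TrivialConjInf

variable {G Γ Q : Type*} [Group G] [Group Γ] [Group Q]

/-- `H` meets some conjugate of itself trivially; equivalently, the action of `G` on `G ⧸ H` is
faithful and has a base of size at most two. -/
def HasTrivialConjInf (H : Subgroup G) : Prop :=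
  ∃ g : G, H ⊓ H.map (MulAut.conj g).toMonoidHom = ⊥

theorem HasTrivialConjInf.of_le_map_conj {H L : Subgroup G} (hL : HasTrivialConjInf L) {y : G}
    (hHL : H ≤ L.map (MulAut.conj y).toMonoidHom) : HasTrivialConjInf H := by
  obtain ⟨g, hg⟩ := hL
  refine ⟨y * g * y⁻¹, eq_bot_iff.2 ?_⟩
  have hconj : (L.map (MulAut.conj y).toMonoidHom).map (MulAut.conj (y * g * y⁻¹)).toMonoidHom =
      (L.map (MulAut.conj g).toMonoidHom).map (MulAut.conj y).toMonoidHom := by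
    simp only [Subgroup.map_map]
    congr 1
    ext x
    simp [mul_assoc]
  calc H ⊓ H.map (MulAut.conj (y * g * y⁻¹)).toMonoidHom
    _ ≤ L.map (MulAut.conj y).toMonoidHom ⊓
        (L.map (MulAut.conj g).toMonoidHom).map (MulAut.conj y).toMonoidHom :=
      inf_le_inf hHL ((Subgroup.map_mono hHL).trans hconj.le)
    _ = (L ⊓ L.map (MulAut.conj g).toMonoidHom).map (MulAut.conj y).toMonoidHom :=
      (Subgroup.map_inf _ _ _ (MulAut.conj y).injective).symm
    _ = ⊥ := by rw [hg, Subgroup.map_bot]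

theorem HasTrivialConjInf.map_of_inf_le_ker {f : Γ →* Q} {K : Subgroup Γ} (hK : f.ker ≤ K) {g : Γ}
    (hg : K ⊓ K.map (MulAut.conj g).toMonoidHom ≤ f.ker) : HasTrivialConjInf (K.map f) := by
  refine ⟨f g, (Subgroup.eq_bot_iff_forall _).2 ?_⟩
  rintro _ ⟨⟨k, hk, rfl⟩, _, ⟨l, hl, rfl⟩, hkl⟩
  have hfkl : f (g * l * g⁻¹) = f k := by simpa using hkl
  have hmem : g * l * g⁻¹ ∈ K := by
    rw [← mul_inv_cancel_right (g * l * g⁻¹) k⁻¹, inv_inv]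
    exact mul_mem (hK (by simp [MonoidHom.mem_ker, ← hfkl])) hk
  rw [← hfkl]
  exact hg ⟨hmem, l, hl, rfl⟩

theorem exists_le_map_conj_of_not_dvd_index {p : ℕ} [Fact p.Prime] {H L : Subgroup G}
    (hH : IsPGroup p H) (hL : ¬ p ∣ L.index) : ∃ y : G, H ≤ L.map (MulAut.conj y).toMonoidHom := by
  obtain ⟨c, hc⟩ := hH.nonempty_fixed_point_of_prime_not_dvd_card (G ⧸ L) hL
  obtain ⟨y, rfl⟩ := QuotientGroup.mk_surjective c
  refine ⟨y, fun h hh => ⟨y⁻¹ * h * y, ?_, by simp [mul_assoc]⟩⟩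
  have hfix : ((h * y : G) : G ⧸ L) = y := hc ⟨h, hh⟩
  rw [mul_assoc]
  exact QuotientGroup.eq.1 hfix.symm

theorem not_dvd_index_of_padicValNat_card_le [Finite G] {p : ℕ} [Fact p.Prime] {K : Subgroup G}
    (hK : padicValNat p (Nat.card G) ≤ padicValNat p (Nat.card K)) : ¬ p ∣ K.index := by
  have hindex : K.index ≠ 0 := Subgroup.index_ne_zero_of_finite
  intro hdvd
  have := one_le_padicValNat_of_dvd hindex hdvd
  rw [← K.card_mul_index, padicValNat.mul Nat.card_pos.ne' hindex] at hK
  omega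

theorem hasTrivialConjInf_quotient_center (e : G ≃* Γ) {p : ℕ} [Fact p.Prime] {K : Subgroup Γ}
    (hK : ¬ p ∣ K.index) (hcenter : Subgroup.center Γ ≤ K) {g : Γ}
    (hg : K ⊓ K.map (MulAut.conj g).toMonoidHom ≤ Subgroup.center Γ)
    {H : Subgroup (G ⧸ Subgroup.center G)} (hH : IsPGroup p H) : HasTrivialConjInf H := by
  let f : Γ →* G ⧸ Subgroup.center G :=
    (QuotientGroup.mk' (Subgroup.center G)).comp e.symm.toMonoidHom
  have hf : Function.Surjective f := (QuotientGroup.mk'_surjective _).comp e.symm.surjective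
  have hker : f.ker = Subgroup.center Γ := by
    ext x
    simp only [f, MonoidHom.mem_ker, MonoidHom.comp_apply, QuotientGroup.mk'_apply,
      QuotientGroup.eq_one_iff]
    exact MulEquivClass.apply_mem_center_iff e.symm
  obtain ⟨y, hy⟩ := exists_le_map_conj_of_not_dvd_index hH
    fun hdvd => hK (hdvd.trans (K.index_map_dvd hf))
  exact (HasTrivialConjInf.map_of_inf_le_ker (hker.trans_le hcenter)
    (hg.trans_eq hker.symm)).of_le_map_conj hy

end TrivialConjInf

section CardGL

variable {F : Type*} [Field F] [Finite F]

theorem pow_card_sub_one_ne_zero {k : ℕ} (hk : k ≠ 0) : Nat.card F ^ k - 1 ≠ 0 :=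
  (Nat.sub_pos_of_lt (Nat.one_lt_pow hk Finite.one_lt_card)).ne'

variable (F) in
theorem card_GL_eq_pow_mul_prod (n : ℕ) :
    Nat.card (GL (Fin n) F) =
      Nat.card F ^ (∑ i ∈ Finset.range n, i) *
        ∏ k ∈ Finset.range n, (Nat.card F ^ (k + 1) - 1) := by
  cases nonempty_fintype F
  have hfactor : ∀ i ∈ Finset.range n, Nat.card F ^ n - Nat.card F ^ i =
      Nat.card F ^ i * (Nat.card F ^ (n - 1 - i + 1) - 1) := by
    intro i hi
    have hlt := Finset.mem_range.1 hi
    rw [Nat.mul_sub, ← pow_add, mul_one, show i + (n - 1 - i + 1) = n by omega]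
  rw [Matrix.card_GL_field, ← Nat.card_eq_fintype_card,
    ← Finset.prod_range fun i => Nat.card F ^ n - Nat.card F ^ i,
    Finset.prod_congr rfl hfactor, Finset.prod_mul_distrib, Finset.prod_pow_eq_pow_sum,
    Finset.prod_range_reflect fun k => Nat.card F ^ (k + 1) - 1]

theorem padicValNat_card_GL {p : ℕ} [Fact p.Prime] (hp : ¬ p ∣ Nat.card F) (n : ℕ) :
    padicValNat p (Nat.card (GL (Fin n) F)) =
      ∑ k ∈ Finset.range n, padicValNat p (Nat.card F ^ (k + 1) - 1) := by
  have hprod : ∀ m, ∏ k ∈ Finset.range m, (Nat.card F ^ (k + 1) - 1) ≠ 0 := fun m =>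
    Finset.prod_ne_zero_iff.2 fun k _ => pow_card_sub_one_ne_zero k.succ_ne_zero
  rw [card_GL_eq_pow_mul_prod, padicValNat.mul (pow_ne_zero _ Nat.card_pos.ne') (hprod n),
    padicValNat.pow, padicValNat.eq_zero_of_not_dvd hp, mul_zero, zero_add]
  induction n with
  | zero => simp
  | succ n ih =>
    rw [Finset.prod_range_succ, Finset.sum_range_succ,
      padicValNat.mul (hprod n) (pow_card_sub_one_ne_zero n.succ_ne_zero), ih]

end CardGL

section Unitriangular

variable {ι R : Type*} [LinearOrder ι] [CommRing R]

/-- The unitriangular matrix with prescribed entries above the diagonal. -/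
def unitriangularMatrix (f : ∀ j : ι, Set.Iio j → R) : Matrix ι ι R :=
  Matrix.of fun i j => if h : i < j then f j ⟨i, h⟩ else if i = j then 1 else 0

theorem unitriangularMatrix_apply_of_lt (f : ∀ j : ι, Set.Iio j → R) {i j : ι} (h : i < j) :
    unitriangularMatrix f i j = f j ⟨i, h⟩ := by
  simp [unitriangularMatrix, h]

theorem unitriangularMatrix_apply_self (f : ∀ j : ι, Set.Iio j → R) (i : ι) :
    unitriangularMatrix f i i = 1 := by
  simp [unitriangularMatrix]

theorem isUpperTriangular_unitriangularMatrix (f : ∀ j : ι, Set.Iio j → R) :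
    (unitriangularMatrix f).IsUpperTriangular := fun i j (hij : j < i) => by
  simp [unitriangularMatrix, hij.not_gt, hij.ne']

variable [Fintype ι]

theorem mul_diag_of_isUpperTriangular {A B : Matrix ι ι R} (hA : A.IsUpperTriangular)
    (hB : B.IsUpperTriangular) (i : ι) : (A * B) i i = A i i * B i i := by
  rw [Matrix.mul_apply, Finset.sum_eq_single_of_mem i (Finset.mem_univ i)]
  intro j _ hj
  rcases hj.lt_or_gt with hji | hij
  · rw [hA hji, zero_mul]
  · rw [hB hij, mul_zero]

theorem isUpperTriangular_inv {A : GL ι R} (hA : A.1.IsUpperTriangular) :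
    A⁻¹.1.IsUpperTriangular := by
  have : Invertible A.1 := A.invertible
  rw [Matrix.coe_units_inv]
  exact Matrix.blockTriangular_inv_of_blockTriangular hA

variable (ι R) in
/-- The group of upper triangular matrices with ones on the diagonal. -/
def unitriangularGroup : Subgroup (GL ι R) where
  carrier := {A | A.1.IsUpperTriangular ∧ ∀ i, A.1 i i = 1}
  one_mem' := ⟨Matrix.blockTriangular_one, fun _ => Matrix.one_apply_eq _⟩
  mul_mem' {A B} hA hB := ⟨hA.1.mul hB.1, fun i => by
    rw [Units.val_mul, mul_diag_of_isUpperTriangular hA.1 hB.1, hA.2, hB.2, mul_one]⟩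
  inv_mem' {A} hA := ⟨isUpperTriangular_inv hA.1, fun i => by
    have hdiag := mul_diag_of_isUpperTriangular hA.1 (isUpperTriangular_inv hA.1) i
    rwa [Units.mul_inv, Matrix.one_apply_eq, hA.2, one_mul, eq_comm] at hdiag⟩

theorem det_unitriangularMatrix (f : ∀ j : ι, Set.Iio j → R) :
    (unitriangularMatrix f).det = 1 := by
  simp [Matrix.det_of_isUpperTriangular (isUpperTriangular_unitriangularMatrix f),
    unitriangularMatrix_apply_self]

variable (ι R) in
/-- Unitriangular matrices are parametrized by their entries above the diagonal. -/
noncomputable def unitriangularEquiv : (∀ j : ι, Set.Iio j → R) ≃ unitriangularGroup ι R where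
  toFun f := ⟨Matrix.GeneralLinearGroup.mk'' (unitriangularMatrix f)
      (by rw [det_unitriangularMatrix]; exact isUnit_one),
    isUpperTriangular_unitriangularMatrix f, unitriangularMatrix_apply_self f⟩
  invFun A j i := A.1.1 i j
  left_inv f := by
    funext j i
    exact unitriangularMatrix_apply_of_lt f i.2
  right_inv A := by
    refine Subtype.ext (Units.ext (Matrix.ext fun i j => ?_))
    change unitriangularMatrix (fun j i => A.1.1 i j) i j = A.1.1 i j
    rcases lt_trichotomy i j with hij | rfl | hji
    · rw [unitriangularMatrix_apply_of_lt _ hij]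
    · rw [unitriangularMatrix_apply_self, A.2.2]
    · rw [isUpperTriangular_unitriangularMatrix _ hji, A.2.1 hji]

theorem card_unitriangularGroup (n : ℕ) (R : Type*) [CommRing R] :
    Nat.card (unitriangularGroup (Fin n) R) = Nat.card R ^ (∑ i ∈ Finset.range n, i) := by
  rw [← Nat.card_congr (unitriangularEquiv (Fin n) R), Nat.card_pi, ← Finset.prod_pow_eq_pow_sum,
    Finset.prod_range]
  simp [Nat.card_fun]

theorem not_dvd_index_unitriangularGroup (n : ℕ) (F : Type*) [Field F] [Finite F] (p : ℕ)
    [Fact p.Prime] [CharP F p] : ¬ p ∣ (unitriangularGroup (Fin n) F).index := by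
  cases nonempty_fintype F
  have hp : p ∣ Nat.card F := by
    rw [Nat.card_eq_fintype_card, ← CharP.cast_eq_zero_iff F p, Nat.cast_card_eq_zero]
  have hindex := (unitriangularGroup (Fin n) F).card_mul_index
  rw [card_GL_eq_pow_mul_prod, card_unitriangularGroup] at hindex
  rw [Nat.eq_of_mul_eq_mul_left (pow_pos Nat.card_pos _) hindex,
    (Fact.out : p.Prime).prime.dvd_finsetProd_iff]
  rintro ⟨k, -, hdvd⟩
  refine (Fact.out : p.Prime).one_lt.ne' (Nat.dvd_one.1 ?_)
  rwa [← Nat.dvd_sub_iff_right (Nat.one_le_pow _ _ Nat.card_pos) (hp.pow k.succ_ne_zero)]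

theorem isUpperTriangular_of_mem_unitriangularGroup_sup_center {A : GL ι R}
    (hA : A ∈ unitriangularGroup ι R ⊔ Subgroup.center (GL ι R)) :
    A.1.IsUpperTriangular ∧ ∃ a : R, ∀ i, A.1 i i = a := by
  obtain ⟨u, hu, z, hz, rfl⟩ := Subgroup.mem_sup_of_normal_right.1 hA
  obtain ⟨a, ha⟩ := Matrix.GeneralLinearGroup.mem_center_iff_val_mem_range_scalar.1 hz
  have hz : z.1.IsUpperTriangular := ha ▸ Matrix.blockTriangular_diagonal _
  refine ⟨hu.1.mul hz, a, fun i => ?_⟩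
  rw [Units.val_mul, mul_diag_of_isUpperTriangular hu.1 hz, hu.2, ← ha]
  simp

/-- The permutation matrix of `i ↦ n - 1 - i`, a representative of the longest Weyl group
element. -/
def antidiagonalGL (n : ℕ) (R : Type*) [CommRing R] : GL (Fin n) R :=
  Matrix.permMatrixHom.toHomUnits Fin.revPerm

theorem antidiagonalGL_conj_apply {n : ℕ} (A : GL (Fin n) R) (i j : Fin n) :
    (antidiagonalGL n R * A * (antidiagonalGL n R)⁻¹).1 i j = A.1 i.rev j.rev := by
  change ((Fin.revPerm⁻¹ : Equiv.Perm (Fin n)).permMatrix R * A.1 *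
    (Fin.revPerm : Equiv.Perm (Fin n)).permMatrix R : Matrix _ _ R) i j = A.1 i.rev j.rev
  rw [PEquiv.mul_toMatrix_toPEquiv, PEquiv.toMatrix_toPEquiv_mul]
  rfl

theorem unitriangularGroup_sup_center_inf_map_conj_le_center (n : ℕ) (R : Type*) [CommRing R] :
    (unitriangularGroup (Fin n) R ⊔ Subgroup.center (GL (Fin n) R)) ⊓
      (unitriangularGroup (Fin n) R ⊔ Subgroup.center (GL (Fin n) R)).map
        (MulAut.conj (antidiagonalGL n R)).toMonoidHom ≤ Subgroup.center (GL (Fin n) R) := by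
  rintro _ ⟨hA, A, hA', rfl⟩
  obtain ⟨hupper, a, hdiag⟩ := isUpperTriangular_of_mem_unitriangularGroup_sup_center hA
  obtain ⟨hlower, -⟩ := isUpperTriangular_of_mem_unitriangularGroup_sup_center hA'
  refine Matrix.GeneralLinearGroup.mem_center_iff_val_mem_range_scalar.2
    ⟨a, Matrix.ext fun i j => ?_⟩
  rw [Matrix.scalar_apply]
  rcases lt_trichotomy i j with hij | rfl | hji
  · refine (Matrix.diagonal_apply_ne _ hij.ne).trans ?_
    exact ((antidiagonalGL_conj_apply A i j).trans (hlower (Fin.rev_lt_rev.2 hij))).symm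
  · exact (Matrix.diagonal_apply_eq _ i).trans (hdiag i).symm
  · exact (Matrix.diagonal_apply_ne _ hji.ne').trans (hupper hji).symm

theorem hasTrivialConjInf_of_charP {n : ℕ} {F : Type*} [Field F] [Finite F] {p : ℕ}
    [Fact p.Prime] [CharP F p] {H : Subgroup (GL (Fin n) F ⧸ Subgroup.center (GL (Fin n) F))}
    (hH : IsPGroup p H) : HasTrivialConjInf H :=
  hasTrivialConjInf_quotient_center (MulEquiv.refl _)
    (fun hdvd => not_dvd_index_unitriangularGroup n F p
      (hdvd.trans (Subgroup.index_dvd_of_le le_sup_left)))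
    le_sup_right (unitriangularGroup_sup_center_inf_map_conj_le_center n F) hH

end Unitriangular

section Center

theorem mem_center_iff_eq_smul_one {F V : Type*} [Field F] [AddCommGroup V] [Module F V]
    [FiniteDimensional F V] {x : LinearMap.GeneralLinearGroup F V} :
    x ∈ Subgroup.center (LinearMap.GeneralLinearGroup F V) ↔ ∃ a : F, x.1 = a • 1 := by
  let b := Module.finBasis F V
  constructor
  · intro hx
    obtain ⟨a, ha⟩ := Matrix.GeneralLinearGroup.mem_center_iff_val_mem_range_scalar.1
      ((MulEquivClass.apply_mem_center_iff (Matrix.GeneralLinearGroup.toLin' b).symm).2 hx)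
    refine ⟨a, (LinearMap.toMatrixAlgEquiv b).injective ?_⟩
    rw [map_smul, map_one, Matrix.smul_one_eq_diagonal]
    exact ha.symm
  · rintro ⟨a, ha⟩
    refine Subgroup.mem_center_iff.2 fun y => Units.ext ?_
    rw [Units.val_mul, Units.val_mul, ha, mul_smul_one, smul_one_mul]

end Center

section Blocks

variable {k W R ι : Type*} [Semiring k] [AddCommMonoid W] [Module k W] [AddCommMonoid R]
  [Module k R]

/-- The endomorphism of `W^ι × R` which permutes the factors `W` by `σ`, then acts on them by the
`β i`, and acts by `γ` on `R`. -/
def monomialMap (β : ι → Module.End k W) (σ : Equiv.Perm ι) (γ : Module.End k R) :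
    Module.End k ((ι → W) × R) :=
  (LinearMap.pi fun i => β i ∘ₗ LinearMap.proj (σ⁻¹ i)).prodMap γ

theorem monomialMap_apply (β : ι → Module.End k W) (σ : Equiv.Perm ι) (γ : Module.End k R)
    (v : (ι → W) × R) : monomialMap β σ γ v = (fun i => β i (v.1 (σ⁻¹ i)), γ v.2) := rfl

theorem monomialMap_single [DecidableEq ι] (β : ι → Module.End k W) (σ : Equiv.Perm ι)
    (γ : Module.End k R) (i : ι) (w : W) :
    monomialMap β σ γ (Pi.single i w, 0) = (Pi.single (σ i) (β (σ i) w), 0) := by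
  refine Prod.ext (funext fun j => ?_) (map_zero γ)
  obtain ⟨j, rfl⟩ := σ.surjective j
  rcases eq_or_ne j i with rfl | hj
  · simp [monomialMap_apply]
  · simp [monomialMap_apply, hj]

theorem eq_one_of_monomialMap_eq_one [Nontrivial W] {β : ι → Module.End k W} {σ : Equiv.Perm ι}
    {γ : Module.End k R} (h : monomialMap β σ γ = 1) : β = 1 ∧ σ = 1 ∧ γ = 1 := by
  classical
  obtain ⟨w, hw⟩ := exists_ne (0 : W)
  have hβ : β = 1 := by
    ext i w
    exact congrFun (congrArg Prod.fst (LinearMap.congr_fun h (fun _ => w, 0))) i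
  refine ⟨hβ, Equiv.ext fun i => ?_, ?_⟩
  · by_contra hi
    have hsingle := LinearMap.congr_fun h (Pi.single i w, 0)
    rw [monomialMap_single, hβ] at hsingle
    have := congrFun (congrArg Prod.fst hsingle) (σ i)
    simp only [Pi.one_apply, Module.End.one_apply, Pi.single_eq_same] at this
    exact hw (this.trans (Pi.single_eq_of_ne (M := fun _ => W) hi w))
  · ext r
    exact congrArg Prod.snd (LinearMap.congr_fun h (0, r))

variable [Fintype ι]

/-- The endomorphism of `W^ι × R` with blocks `M i j` on `W^ι`, with `e` in every row of the column
of `R`, and with the identity on `R`. -/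
def blockMap (M : ι → ι → Module.End k W) (e : R →ₗ[k] W) : Module.End k ((ι → W) × R) :=
  (LinearMap.pi fun i => (∑ j, M i j ∘ₗ LinearMap.proj j).coprod e).prod (LinearMap.snd k _ R)

theorem blockMap_apply (M : ι → ι → Module.End k W) (e : R →ₗ[k] W) (v : (ι → W) × R) :
    blockMap M e v = (fun i => ∑ j, M i j (v.1 j) + e v.2, v.2) := by
  ext <;> simp [blockMap]

theorem blockMap_single [DecidableEq ι] (M : ι → ι → Module.End k W) (e : R →ₗ[k] W) (i j : ι)
    (w : W) : (blockMap M e (Pi.single j w, 0)).1 i = M i j w := by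
  simp [blockMap_apply, Pi.single_apply, apply_ite]

theorem blockMap_zero_right (M : ι → ι → Module.End k W) (e : R →ₗ[k] W) (r : R) :
    blockMap M e (0, r) = (fun _ => e r, r) := by
  simp [blockMap_apply]

section Commutation

variable {M : ι → ι → Module.End k W} {e : R →ₗ[k] W} {β β' : ι → Module.End k W}
  {σ τ : Equiv.Perm ι} {γ γ' : Module.End k R}
  (h : monomialMap β σ γ * blockMap M e = blockMap M e * monomialMap β' τ γ')

include h

theorem block_comm_of_monomialMap_mul_blockMap (i j : ι) :
    β i * M (σ⁻¹ i) (τ⁻¹ j) = M i j * β' j := by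
  classical
  ext w
  have hw := LinearMap.congr_fun h (Pi.single (τ⁻¹ j) w, 0)
  rw [Module.End.mul_apply, Module.End.mul_apply, monomialMap_single, monomialMap_apply,
    show τ (τ⁻¹ j) = j from τ.apply_symm_apply j] at hw
  simpa only [blockMap_single, Module.End.mul_apply] using congrFun (congrArg Prod.fst hw) i

theorem column_comm_of_monomialMap_mul_blockMap (i : ι) : β i ∘ₗ e = e ∘ₗ γ := by
  ext r
  have hr := LinearMap.congr_fun h (0, r)
  rw [Module.End.mul_apply, Module.End.mul_apply, blockMap_zero_right, monomialMap_apply,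
    monomialMap_apply] at hr
  have hγ : γ r = γ' r := congrArg Prod.snd hr
  rw [LinearMap.comp_apply, LinearMap.comp_apply, hγ]
  simpa [blockMap_apply] using congrFun (congrArg Prod.fst hr) i

end Commutation

end Blocks

section Triangular

theorem perm_eq_one_of_le_iff_le {ι : Type*} [LinearOrder ι] [Finite ι] {σ τ : Equiv.Perm ι}
    (h : ∀ i j, σ i ≤ τ j ↔ i ≤ j) : σ = 1 ∧ τ = 1 := by
  have hle : ∀ i, σ i ≤ τ i := fun i => (h i i).2 le_rfl
  have hlt : ∀ i j, i < j → τ i < σ j := fun i j hij => not_le.1 ((h j i).not.2 hij.not_ge)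
  have hσ : StrictMono σ := fun i j hij => (hle i).trans_lt (hlt i j hij)
  have hτ : StrictMono τ := fun i j hij => (hlt i j hij).trans_le (hle j)
  exact ⟨Equiv.coe_fn_injective hσ.eq_id, Equiv.coe_fn_injective hτ.eq_id⟩

variable {k W R ι : Type*} [Ring k] [AddCommGroup W] [Module k W] [AddCommGroup R]
  [Module k R] [LinearOrder ι]

theorem blockMap_injective [Fintype ι] {M : ι → ι → Module.End k W} (e : R →ₗ[k] W)
    (hlower : ∀ i j, j < i → M i j = 0) (hdiag : ∀ i, Function.Injective (M i i)) :
    Function.Injective (blockMap M e) := by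
  rw [injective_iff_map_eq_zero]
  rintro ⟨v, r⟩ hv
  rw [blockMap_apply, Prod.mk_eq_zero] at hv
  obtain ⟨hv, rfl : r = 0⟩ := hv
  suffices v = 0 by rw [this, Prod.mk_zero_zero]
  by_contra hne
  obtain ⟨i, hi, hmax⟩ := WellFounded.has_min (wellFounded_gt (α := ι)) {i | v i ≠ 0}
    (Function.ne_iff.1 hne)
  have hrow : M i i (v i) = 0 := by
    rw [← Finset.sum_eq_single_of_mem (f := fun j => M i j (v j)) i (Finset.mem_univ i)]
    · simpa using congrFun hv i
    · intro j _ hj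
      rcases hj.lt_or_gt with hji | hij
      · rw [hlower i j hji, LinearMap.zero_apply]
      · rw [of_not_not fun h => hmax j h hij, map_zero]
  exact hi ((map_eq_zero_iff _ (hdiag i)).1 hrow)

/-- The blocks of an upper triangular block matrix with constant blocks `U` on the diagonal and `E`
above it. -/
def triangularBlocks (U E : Module.End k W) (i j : ι) : Module.End k W :=
  if i = j then U else if i < j then E else 0

theorem triangularBlocks_self (U E : Module.End k W) (i : ι) : triangularBlocks U E i i = U :=
  if_pos rfl

theorem triangularBlocks_of_lt (U E : Module.End k W) {i j : ι} (h : i < j) :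
    triangularBlocks U E i j = E := by
  rw [triangularBlocks, if_neg h.ne, if_pos h]

theorem triangularBlocks_of_gt (U E : Module.End k W) {i j : ι} (h : j < i) :
    triangularBlocks U E i j = 0 := by
  rw [triangularBlocks, if_neg h.ne', if_neg h.asymm]

theorem triangularBlocks_eq_zero_iff {U E : Module.End k W} (hU : U ≠ 0) (hE : E ≠ 0) {i j : ι} :
    triangularBlocks U E i j = 0 ↔ j < i := by
  refine ⟨fun h => ?_, triangularBlocks_of_gt U E⟩
  rcases lt_trichotomy i j with hij | rfl | hji
  · exact absurd h (by rwa [triangularBlocks_of_lt U E hij])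
  · exact absurd h (by rwa [triangularBlocks_self])
  · exact hji

theorem perm_eq_one_of_monomialMap_mul_blockMap [Fintype ι] {U E : Module.End k W} (hU : U ≠ 0)
    (hE : E ≠ 0) {e : R →ₗ[k] W} {β β' : ι → Module.End k W} (hβ : ∀ i, IsUnit (β i))
    (hβ' : ∀ i, IsUnit (β' i)) {σ τ : Equiv.Perm ι} {γ γ' : Module.End k R}
    (h : monomialMap β σ γ * blockMap (triangularBlocks U E) e =
      blockMap (triangularBlocks U E) e * monomialMap β' τ γ') : σ = 1 ∧ τ = 1 := by
  suffices σ⁻¹ = 1 ∧ τ⁻¹ = 1 by simpa only [inv_eq_one] using this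
  refine perm_eq_one_of_le_iff_le fun i j => ?_
  rw [← not_lt, ← not_lt, ← triangularBlocks_eq_zero_iff hU hE,
    ← triangularBlocks_eq_zero_iff hU hE, ← (hβ i).mul_right_eq_zero,
    block_comm_of_monomialMap_mul_blockMap h, (hβ' j).mul_left_eq_zero]

end Triangular

section Rigid

variable {F W R ι : Type*} [Field F] [AddCommGroup W] [Module F W] [AddCommGroup R] [Module F R]

/-- The condition on the blocks `U` and `E` which makes `blockMap (triangularBlocks U E) e`
conjugate no non-scalar diagonal element of `B ≀ Sym(ι)` into `B ≀ Sym(ι)`: a `b ∈ B` with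
`U⁻¹ * b * U` in `B` is scalar as soon as `b` preserves the range of `E` or `U⁻¹ * b * U` preserves
its kernel. -/
def IsRigidPair (B : Subgroup (LinearMap.GeneralLinearGroup F W)) (U E : Module.End F W) : Prop :=
  ∀ b ∈ B, ∀ b' ∈ B, b.1 * U = U * b'.1 →
    LinearMap.range E ∈ Module.End.invtSubmodule b.1 ∨
      LinearMap.ker E ∈ Module.End.invtSubmodule b'.1 →
        ∃ a : F, b.1 = a • 1

variable {B : Subgroup (LinearMap.GeneralLinearGroup F W)} {U E : Module.End F W}

theorem IsRigidPair.exists_forall_eq_smul_one [LinearOrder ι] [Nontrivial ι]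
    (hB : IsRigidPair B U E) (hU : Function.Injective U) (hE : E ≠ 0) {b b' : ι → B}
    (hdiag : ∀ i, (b i).1.1 * U = U * (b' i).1.1)
    (habove : ∀ i j, i < j → (b i).1.1 * E = E * (b' j).1.1) :
    ∃ a : F, ∀ i, (b i).1.1 = a • 1 := by
  have hscalar : ∀ i, ∃ a : F, (b i).1.1 = a • 1 := by
    intro i
    refine hB _ (b i).2 _ (b' i).2 (hdiag i) ?_
    obtain ⟨j, hj⟩ := exists_ne i
    rcases hj.lt_or_gt with hji | hij
    · refine .inr fun w (hw : E w = 0) => ?_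
      have := LinearMap.congr_fun (habove j i hji) w
      rw [Module.End.mul_apply, hw, map_zero] at this
      exact this.symm
    · refine .inl ?_
      rintro _ ⟨w, rfl⟩
      exact ⟨_, (LinearMap.congr_fun (habove i j hij) w).symm⟩
  choose a ha using hscalar
  have hb' : ∀ i, (b' i).1.1 = a i • 1 := by
    refine fun i => LinearMap.ext fun w => hU ?_
    have := LinearMap.congr_fun (hdiag i) w
    simpa [ha i] using this.symm
  have hlt : ∀ i j, i < j → a i = a j := by
    intro i j hij
    have := habove i j hij
    rw [ha, hb', smul_one_mul, mul_smul_one] at this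
    exact smul_left_injective F hE this
  have hconst : ∀ i j, a i = a j := by
    intro i j
    rcases lt_trichotomy i j with hij | rfl | hji
    · exact hlt i j hij
    · rfl
    · exact (hlt j i hji).symm
  obtain ⟨i₀⟩ : Nonempty ι := inferInstance
  exact ⟨a i₀, fun i => by rw [ha, hconst i i₀]⟩

theorem IsRigidPair.exists_monomialMap_eq_smul_one [LinearOrder ι] [Fintype ι] [Nontrivial ι]
    (hB : IsRigidPair B U E) (hU : Function.Injective U) (hE : E ≠ 0) {e : R →ₗ[F] W}
    (he : Function.Injective e) {b b' : ι → B} {σ τ : Equiv.Perm ι} {γ γ' : Module.End F R}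
    (h : monomialMap (fun i => (b i).1.1) σ γ * blockMap (triangularBlocks U E) e =
      blockMap (triangularBlocks U E) e * monomialMap (fun i => (b' i).1.1) τ γ') :
    ∃ a : F, monomialMap (fun i => (b i).1.1) σ γ = a • 1 := by
  have hU0 : U ≠ 0 := by
    rintro rfl
    exact hE (LinearMap.ext fun w => hU rfl)
  obtain ⟨rfl, rfl⟩ := perm_eq_one_of_monomialMap_mul_blockMap hU0 hE
    (fun i => (b i).1.isUnit) (fun i => (b' i).1.isUnit) h
  have hblock := block_comm_of_monomialMap_mul_blockMap h
  simp only [inv_one, Equiv.Perm.one_apply] at hblock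
  obtain ⟨a, ha⟩ := hB.exists_forall_eq_smul_one hU hE
    (fun i => by simpa only [triangularBlocks_self] using hblock i i)
    (fun i j hij => by simpa only [triangularBlocks_of_lt U E hij] using hblock i j)
  have hγ : γ = a • 1 := by
    obtain ⟨i⟩ : Nonempty ι := inferInstance
    refine LinearMap.ext fun r => he ?_
    have := LinearMap.congr_fun (column_comm_of_monomialMap_mul_blockMap h i) r
    simpa [ha] using this.symm
  refine ⟨a, LinearMap.ext fun v => ?_⟩
  rw [monomialMap_apply, hγ]
  ext <;> simp [ha]

end Rigid

section Wreath

variable {F W R ι : Type*} [Field F] [AddCommGroup W] [Module F W] [AddCommGroup R] [Module F R]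

variable (R ι) in
/-- The wreath product `B ≀ Sym(ι)` times `GL(R)`, acting on `W^ι × R`. -/
def wreathRep (B : Subgroup (LinearMap.GeneralLinearGroup F W)) :
    ((ι → B) ⋊[mulAutArrow (G := Equiv.Perm ι) (A := ι) (M := B)] Equiv.Perm ι) ×
      LinearMap.GeneralLinearGroup F R →* Module.End F ((ι → W) × R) where
  toFun x := monomialMap (fun i => (x.1.left i).1.1) x.1.right x.2.1
  map_one' := rfl
  map_mul' _ _ := rfl

variable (B : Subgroup (LinearMap.GeneralLinearGroup F W))

theorem wreathRep_toHomUnits_injective [Nontrivial W] :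
    Function.Injective (wreathRep R ι B).toHomUnits := by
  rw [injective_iff_map_eq_one]
  rintro ⟨⟨b, σ⟩, γ⟩ h
  obtain ⟨hb, rfl : σ = 1, hγ⟩ := eq_one_of_monomialMap_eq_one (congrArg Units.val h)
  obtain rfl : b = 1 := funext fun i => Subtype.ext (Units.ext (congrFun hb i))
  obtain rfl : γ = 1 := Units.ext hγ
  rfl

theorem card_range_wreathRep [Finite ι] [Nontrivial W] :
    Nat.card (wreathRep R ι B).toHomUnits.range =
      Nat.card B ^ Nat.card ι * (Nat.card ι).factorial *
        Nat.card (LinearMap.GeneralLinearGroup F R) := by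
  rw [Nat.card_congr (MonoidHom.ofInjective (wreathRep_toHomUnits_injective B)).symm.toEquiv,
    Nat.card_prod, SemidirectProduct.card, Nat.card_fun, Nat.card_perm]

variable {B}

theorem center_le_range_wreathRep [Finite ι] [Nonempty ι] [Nontrivial W] [FiniteDimensional F W]
    [FiniteDimensional F R] (hB : Subgroup.center (LinearMap.GeneralLinearGroup F W) ≤ B) :
    Subgroup.center (LinearMap.GeneralLinearGroup F ((ι → W) × R)) ≤
      (wreathRep R ι B).toHomUnits.range := by
  intro x hx
  obtain ⟨a, ha⟩ := mem_center_iff_eq_smul_one.1 hx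
  have ha0 : a ≠ 0 := by
    rintro rfl
    exact x.ne_zero (ha.trans (zero_smul F 1))
  let aW : LinearMap.GeneralLinearGroup F W :=
    Units.map (algebraMap F (Module.End F W)).toMonoidHom (Units.mk0 a ha0)
  let aR : LinearMap.GeneralLinearGroup F R :=
    Units.map (algebraMap F (Module.End F R)).toMonoidHom (Units.mk0 a ha0)
  have haW : aW ∈ B := hB (mem_center_iff_eq_smul_one.2 ⟨a, Algebra.algebraMap_eq_smul_one a⟩)
  refine ⟨⟨⟨fun _ => ⟨aW, haW⟩, 1⟩, aR⟩, Units.ext (LinearMap.ext fun v => ?_)⟩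
  rw [ha]
  rfl

theorem IsRigidPair.range_wreathRep_inf_map_conj_le_center [LinearOrder ι] [Fintype ι]
    [Nontrivial ι] [FiniteDimensional F W] [FiniteDimensional F R] {U E : Module.End F W}
    (hB : IsRigidPair B U E) (hU : Function.Injective U) (hE : E ≠ 0) {e : R →ₗ[F] W}
    (he : Function.Injective e) {g : LinearMap.GeneralLinearGroup F ((ι → W) × R)}
    (hg : g.1 = blockMap (triangularBlocks U E) e) :
    (wreathRep R ι B).toHomUnits.range ⊓
        (wreathRep R ι B).toHomUnits.range.map (MulAut.conj g).toMonoidHom ≤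
      Subgroup.center (LinearMap.GeneralLinearGroup F ((ι → W) × R)) := by
  rintro _ ⟨⟨x, rfl⟩, _, ⟨y, rfl⟩, hxy⟩
  have hcomm : (wreathRep R ι B).toHomUnits x * g = g * (wreathRep R ι B).toHomUnits y :=
    (mul_inv_eq_iff_eq_mul.1 hxy).symm
  have hcomm := congrArg Units.val hcomm
  rw [Units.val_mul, Units.val_mul, hg] at hcomm
  exact mem_center_iff_eq_smul_one.2 (hB.exists_monomialMap_eq_smul_one hU hE he hcomm)

theorem hasTrivialConjInf_of_isRigidPair [Finite F] [FiniteDimensional F W]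
    [FiniteDimensional F R] [Nontrivial W] {p : ℕ} [Fact p.Prime] {n m : ℕ} (hm : 2 ≤ m)
    (hn : m * Module.finrank F W + Module.finrank F R = n)
    (hcenter : Subgroup.center (LinearMap.GeneralLinearGroup F W) ≤ B)
    (hcard : padicValNat p (Nat.card (GL (Fin n) F)) ≤
      padicValNat p (Nat.card B ^ m * m.factorial * Nat.card (LinearMap.GeneralLinearGroup F R)))
    {U E : Module.End F W} (hB : IsRigidPair B U E) (hU : Function.Injective U) (hE : E ≠ 0)
    {e : R →ₗ[F] W} (he : Function.Injective e)
    {H : Subgroup (GL (Fin n) F ⧸ Subgroup.center (GL (Fin n) F))} (hH : IsPGroup p H) :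
    HasTrivialConjInf H := by
  have : Nontrivial (Fin m) := Fin.nontrivial_iff_two_le.2 hm
  have hfinrank : Module.finrank F ((Fin m → W) × R) = n := by
    rw [Module.finrank_prod, Module.finrank_pi_fintype]
    simpa using hn
  let toLin := Matrix.GeneralLinearGroup.toLin' (Module.finBasisOfFinrankEq F _ hfinrank)
  have : Finite (LinearMap.GeneralLinearGroup F ((Fin m → W) × R)) := .of_equiv _ toLin.toEquiv
  have hblock : Function.Injective (blockMap (ι := Fin m) (triangularBlocks U E) e) :=
    blockMap_injective e (fun i j => triangularBlocks_of_gt U E)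
      fun i => by rwa [triangularBlocks_self]
  refine hasTrivialConjInf_quotient_center toLin (not_dvd_index_of_padicValNat_card_le ?_)
    (center_le_range_wreathRep hcenter)
    (hB.range_wreathRep_inf_map_conj_le_center hU hE he
      (g := .ofLinearEquiv (.ofInjectiveEndo _ hblock)) rfl) hH
  rwa [← Nat.card_congr toLin.toEquiv, card_range_wreathRep, Nat.card_fin]

end Wreath

section TwoAdic

variable {q : ℕ}

theorem padicValNat_two_pow_sub_one (hq : q % 4 = 1) (hq1 : 1 < q) {k : ℕ} (hk : k ≠ 0) :
    padicValNat 2 (q ^ k - 1) = padicValNat 2 (q - 1) + padicValNat 2 k := by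
  have hpow : 1 < q ^ k := Nat.one_lt_pow hk hq1
  have hlte := Int.two_pow_sub_pow' (x := q) (y := 1) k (by omega) (by omega)
  rw [one_pow, ← Nat.cast_pow, ← Nat.cast_one, ← Nat.cast_sub hpow.le, ← Nat.cast_sub hq1.le,
    ← Nat.cast_ofNat (R := ℤ) (n := 2), Int.natCast_emultiplicity, Int.natCast_emultiplicity,
    Int.natCast_emultiplicity, ← padicValNat_eq_emultiplicity (Nat.sub_pos_of_lt hpow).ne',
    ← padicValNat_eq_emultiplicity (Nat.sub_pos_of_lt hq1).ne',
    ← padicValNat_eq_emultiplicity hk] at hlte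
  exact_mod_cast hlte

theorem padicValNat_two_pow_sub_one_of_odd (hq : q % 4 = 3) {k : ℕ} (hk : Odd k) :
    padicValNat 2 (q ^ k - 1) = 1 := by
  obtain ⟨j, rfl⟩ := hk
  have hmod : q ^ (2 * j + 1) % 4 = 3 := by
    rw [pow_succ, pow_mul, Nat.mul_mod, Nat.pow_mod, Nat.pow_mod q 2, hq]
    norm_num
  obtain ⟨c, hc⟩ : ∃ c, q ^ (2 * j + 1) - 1 = 2 * c := ⟨(q ^ (2 * j + 1) - 1) / 2, by omega⟩
  have hc_odd : ¬ 2 ∣ c := by omega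
  rw [hc, padicValNat.mul two_ne_zero (by omega), padicValNat.eq_zero_of_not_dvd hc_odd,
    padicValNat.self one_lt_two]

theorem sum_padicValNat_pow_sub_one_of_mod_four_eq_one (hq : q % 4 = 1) (hq1 : 1 < q) (n : ℕ) :
    ∑ k ∈ Finset.range n, padicValNat 2 (q ^ (k + 1) - 1) =
      padicValNat 2 ((q - 1) ^ n * n.factorial) := by
  have hne : q - 1 ≠ 0 := by omega
  induction n with
  | zero => simp
  | succ n ih =>
    have hfactor : (q - 1) ^ (n + 1) * (n + 1).factorial =
        (q - 1) ^ n * n.factorial * ((q - 1) * (n + 1)) := by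
      rw [Nat.factorial_succ]
      ring
    rw [Finset.sum_range_succ, ih, padicValNat_two_pow_sub_one hq hq1 n.succ_ne_zero, hfactor,
      padicValNat.mul (mul_ne_zero (pow_ne_zero _ hne) n.factorial_ne_zero)
        (mul_ne_zero hne n.succ_ne_zero),
      padicValNat.mul hne n.succ_ne_zero]

theorem sum_range_two_mul_padicValNat_pow_sub_one_of_mod_four_eq_three (hq : q % 4 = 3) (m : ℕ) :
    ∑ k ∈ Finset.range (2 * m), padicValNat 2 (q ^ (k + 1) - 1) =
      padicValNat 2 ((2 * (q ^ 2 - 1)) ^ m * m.factorial) := by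
  have hlt : 1 < q ^ 2 := Nat.one_lt_pow two_ne_zero (by omega)
  have hmod : q ^ 2 % 4 = 1 := by rw [Nat.pow_mod, hq]
  have hne : q ^ 2 - 1 ≠ 0 := by omega
  induction m with
  | zero => simp
  | succ m ih =>
    have hfactor : (2 * (q ^ 2 - 1)) ^ (m + 1) * (m + 1).factorial =
        (2 * (q ^ 2 - 1)) ^ m * m.factorial * (2 * ((q ^ 2 - 1) * (m + 1))) := by
      rw [Nat.factorial_succ]
      ring
    rw [mul_add_one, Finset.sum_range_succ, Finset.sum_range_succ, ih,
      padicValNat_two_pow_sub_one_of_odd hq ⟨m, rfl⟩,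
      show q ^ (2 * m + 1 + 1) = (q ^ 2) ^ (m + 1) by ring,
      padicValNat_two_pow_sub_one hmod hlt m.succ_ne_zero, hfactor,
      padicValNat.mul (mul_ne_zero (pow_ne_zero _ (by omega)) m.factorial_ne_zero)
        (mul_ne_zero two_ne_zero (mul_ne_zero hne m.succ_ne_zero)),
      padicValNat.mul two_ne_zero (mul_ne_zero hne m.succ_ne_zero),
      padicValNat.mul hne m.succ_ne_zero, padicValNat.self one_lt_two]
    ring

theorem sum_range_two_mul_add_one_padicValNat_pow_sub_one_of_mod_four_eq_three (hq : q % 4 = 3)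
    (m : ℕ) : ∑ k ∈ Finset.range (2 * m + 1), padicValNat 2 (q ^ (k + 1) - 1) =
      padicValNat 2 ((2 * (q ^ 2 - 1)) ^ m * m.factorial * (q - 1)) := by
  have hlt : 1 < q ^ 2 := Nat.one_lt_pow two_ne_zero (by omega)
  have hself : padicValNat 2 (q - 1) = 1 := by
    simpa only [pow_one] using padicValNat_two_pow_sub_one_of_odd hq odd_one
  rw [Finset.sum_range_succ, sum_range_two_mul_padicValNat_pow_sub_one_of_mod_four_eq_three hq,
    padicValNat_two_pow_sub_one_of_odd hq ⟨m, rfl⟩,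
    padicValNat.mul (mul_ne_zero (pow_ne_zero _ (by omega)) m.factorial_ne_zero) (by omega), hself]

end TwoAdic

section ModFourEqOne

theorem card_generalLinearGroup_self (F : Type*) [Field F] [Finite F] :
    Nat.card (LinearMap.GeneralLinearGroup F F) = Nat.card F - 1 := by
  cases nonempty_fintype F
  rw [← Nat.card_congr
    (Matrix.GeneralLinearGroup.toLin' (Module.Basis.singleton (Fin 1) F)).toEquiv,
    Matrix.card_GL_field, ← Nat.card_eq_fintype_card]
  simp

theorem hasTrivialConjInf_of_card_mod_four_eq_one {n : ℕ} (hn : 2 ≤ n) {F : Type*} [Field F]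
    [Finite F] (hF : Nat.card F % 4 = 1)
    {H : Subgroup (GL (Fin n) F ⧸ Subgroup.center (GL (Fin n) F))} (hH : IsPGroup 2 H) :
    HasTrivialConjInf H := by
  have hrigid : IsRigidPair (⊤ : Subgroup (LinearMap.GeneralLinearGroup F F)) 1 1 :=
    fun b _ _ _ _ _ => ⟨b.1 1, LinearMap.ext_ring (by simp)⟩
  refine hasTrivialConjInf_of_isRigidPair (R := PUnit.{1}) (e := 0) hn
    (by simp [Module.finrank_zero_of_subsingleton]) le_top ?_ hrigid Function.injective_id
    one_ne_zero (Function.injective_of_subsingleton _) hH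
  rw [padicValNat_card_GL (by omega),
    sum_padicValNat_pow_sub_one_of_mod_four_eq_one hF Finite.one_lt_card, Subgroup.card_top,
    card_generalLinearGroup_self,
    Nat.card_unique (α := LinearMap.GeneralLinearGroup F PUnit.{1}), mul_one]

end ModFourEqOne

section Similitude

variable {F : Type*} [Field F]

theorem sq_add_sq_ne_zero (hF : ¬ IsSquare (-1 : F)) {p : F × F} (hp : p ≠ 0) :
    p.1 ^ 2 + p.2 ^ 2 ≠ 0 := by
  intro h
  have hx : p.1 ≠ 0 := by
    intro hx
    refine hp (Prod.ext hx ?_)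
    simpa [hx] using h
  exact hF ⟨p.2 / p.1, by field_simp; linear_combination -h⟩

/-- The linear map of `F²` with columns `(x, y)` and `s (-y, x)`. For `s = 1` and `s = -1` these are
the proper and the improper similitudes of the form `x² + y²`. -/
def similitudeMap (x y s : F) : Module.End F (F × F) where
  toFun v := (x * v.1 - s * y * v.2, y * v.1 + s * x * v.2)
  map_add' u v := by ext <;> simp <;> ring
  map_smul' a v := by ext <;> simp <;> ring

theorem similitudeMap_apply (x y s : F) (v : F × F) :
    similitudeMap x y s v = (x * v.1 - s * y * v.2, y * v.1 + s * x * v.2) := rfl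

theorem smul_one_eq_similitudeMap (a : F) : a • 1 = similitudeMap a 0 1 := by
  ext <;> simp [similitudeMap_apply]

theorem similitudeMap_inj {x y s x' y' s' : F} (hxy : x ^ 2 + y ^ 2 ≠ 0)
    (h : similitudeMap x y s = similitudeMap x' y' s') : x = x' ∧ y = y' ∧ s = s' := by
  have h₁ := LinearMap.congr_fun h (1, 0)
  have h₂ := LinearMap.congr_fun h (0, 1)
  simp only [similitudeMap_apply, Prod.ext_iff, mul_one, mul_zero, sub_zero, add_zero, zero_sub,
    zero_add] at h₁ h₂
  obtain ⟨rfl, rfl⟩ := h₁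
  refine ⟨rfl, rfl, mul_right_cancel₀ hxy ?_⟩
  linear_combination x * h₂.2 - y * h₂.1

theorem similitudeMap_mul (x y x' y' s' : F) {s : F} (hs : s ^ 2 = 1) :
    similitudeMap x y s * similitudeMap x' y' s' =
      similitudeMap (x * x' - s * y * y') (y * x' + s * x * y') (s * s') := by
  refine LinearMap.ext fun v => Prod.ext ?_ ?_
  · simp only [similitudeMap_apply, Module.End.mul_apply]
    linear_combination s' * x * y' * v.2 * hs
  · simp only [similitudeMap_apply, Module.End.mul_apply]
    linear_combination s' * y * y' * v.2 * hs

theorem similitudeMap_inv_mul {x y s : F} (hxy : x ^ 2 + y ^ 2 ≠ 0) (hs : s ^ 2 = 1) :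
    similitudeMap (x / (x ^ 2 + y ^ 2)) (-s * y / (x ^ 2 + y ^ 2)) s * similitudeMap x y s = 1 := by
  have hone : (1 : Module.End F (F × F)) = similitudeMap 1 0 1 := by
    rw [← smul_one_eq_similitudeMap, one_smul]
  rw [similitudeMap_mul _ _ _ _ _ hs, hone]
  congr 1
  · field_simp
    linear_combination y ^ 2 * hs
  · field_simp
    ring
  · rw [← sq, hs]

theorem ne_zero_of_isUnit_similitudeMap {x y s : F} (h : IsUnit (similitudeMap x y s)) :
    (x, y) ≠ 0 := by
  rintro ⟨⟩
  refine h.ne_zero (LinearMap.ext fun v => ?_)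
  simp [similitudeMap_apply]

/-- The similitude group of the anisotropic binary form `x² + y²`. -/
def similitudeGroup (hF : ¬ IsSquare (-1 : F)) :
    Subgroup (LinearMap.GeneralLinearGroup F (F × F)) where
  carrier := {b | ∃ x y s : F, s ^ 2 = 1 ∧ b.1 = similitudeMap x y s}
  one_mem' := ⟨1, 0, 1, one_pow 2, by rw [← smul_one_eq_similitudeMap, one_smul]; rfl⟩
  mul_mem' := by
    rintro a b ⟨x, y, s, hs, ha⟩ ⟨x', y', s', hs', hb⟩
    exact ⟨_, _, s * s', by rw [mul_pow, hs, hs', one_mul],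
      by rw [Units.val_mul, ha, hb, similitudeMap_mul _ _ _ _ _ hs]⟩
  inv_mem' := by
    rintro b ⟨x, y, s, hs, hb⟩
    have hxy := sq_add_sq_ne_zero hF (ne_zero_of_isUnit_similitudeMap (hb ▸ b.isUnit))
    exact ⟨_, _, s, hs, Units.inv_eq_of_mul_eq_one_left (hb.symm ▸ similitudeMap_inv_mul hxy hs)⟩

theorem center_le_similitudeGroup (hF : ¬ IsSquare (-1 : F)) :
    Subgroup.center (LinearMap.GeneralLinearGroup F (F × F)) ≤ similitudeGroup hF := by
  intro b hb
  obtain ⟨a, ha⟩ := mem_center_iff_eq_smul_one.1 hb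
  exact ⟨a, 0, 1, one_pow 2, ha.trans (smul_one_eq_similitudeMap a)⟩

/-- The parametrization of the similitude group by the sign `s` and the image `(x, y)` of the first
basis vector. -/
noncomputable def similitudeGroupEquiv (hF : ¬ IsSquare (-1 : F)) :
    {s : F // s ^ 2 = 1} × {p : F × F // p ≠ 0} ≃ similitudeGroup hF :=
  .ofBijective
    (fun t => ⟨(IsUnit.of_mul_eq_one_right _
      (similitudeMap_inv_mul (sq_add_sq_ne_zero hF t.2.2) t.1.2)).unit, _, _, _, t.1.2, rfl⟩) <| by
    constructor
    · rintro ⟨s, p⟩ ⟨s', p'⟩ h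
      obtain ⟨hx, hy, hs⟩ := similitudeMap_inj (sq_add_sq_ne_zero hF p.2)
        (congrArg (fun b : similitudeGroup hF => b.1.1) h)
      exact Prod.ext (Subtype.ext hs) (Subtype.ext (Prod.ext hx hy))
    · rintro ⟨b, x, y, s, hs, hb⟩
      exact ⟨⟨⟨s, hs⟩, ⟨(x, y), ne_zero_of_isUnit_similitudeMap (hb ▸ b.isUnit)⟩⟩,
        Subtype.ext (Units.ext hb.symm)⟩

theorem card_sq_eq_one (h : (1 : F) ≠ -1) : Nat.card {s : F // s ^ 2 = 1} = 2 := by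
  have hpair : {s : F | s ^ 2 = 1} = {1, -1} := Set.ext fun s => sq_eq_one_iff
  exact (congrArg Set.ncard hpair).trans (Set.ncard_pair h)

theorem card_similitudeGroup [Finite F] (hF : ¬ IsSquare (-1 : F)) :
    Nat.card (similitudeGroup hF) = 2 * (Nat.card F ^ 2 - 1) := by
  classical
  cases nonempty_fintype F
  have hone : (1 : F) ≠ -1 := fun h => hF ⟨1, by rw [mul_one, ← h]⟩
  have hne_zero : Nat.card {p : F × F // p ≠ 0} = Nat.card F ^ 2 - 1 := by
    rw [Nat.card_eq_fintype_card, Fintype.card_subtype_compl, Fintype.card_prod,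
      Fintype.card_subtype_eq, sq, Nat.card_eq_fintype_card]
  rw [← Nat.card_congr (similitudeGroupEquiv hF), Nat.card_prod, card_sq_eq_one hone, hne_zero]

variable (F) in
/-- The unipotent map `(v₁, v₂) ↦ (v₁ + v₂, v₂)`. -/
def shear : Module.End F (F × F) :=
  (LinearMap.fst F F F + LinearMap.snd F F F).prod (LinearMap.snd F F F)

theorem shear_apply (v : F × F) : shear F v = (v.1 + v.2, v.2) := rfl

theorem shear_injective : Function.Injective (shear F) := by
  rintro ⟨x, y⟩ ⟨x', y'⟩ h
  obtain ⟨hx : x + y = x' + y', rfl : y = y'⟩ := Prod.mk.inj h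
  rw [add_right_cancel hx]

theorem similitudeMap_eq_smul_one_of_shear_comm {x y s x' y' s' : F} (hxy : (x, y) ≠ 0)
    (hy : y = 0 ∨ y' = 0)
    (h : similitudeMap x y s * shear F = shear F * similitudeMap x' y' s') :
    similitudeMap x y s = x • 1 := by
  have h₁ := LinearMap.congr_fun h (1, 0)
  have h₂ := LinearMap.congr_fun h (0, 1)
  simp only [Module.End.mul_apply, similitudeMap_apply, shear_apply, Prod.ext_iff, mul_one,
    mul_zero, sub_zero, add_zero, zero_sub, zero_add] at h₁ h₂
  obtain rfl : y = y' := h₁.2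
  obtain rfl : y = 0 := hy.elim id id
  have hx : x ≠ 0 := by
    rintro rfl
    exact hxy rfl
  have hs : s = 1 := mul_right_cancel₀ hx (by linear_combination h₂.2 - h₂.1)
  rw [hs, smul_one_eq_similitudeMap]

theorem isRigidPair_similitudeGroup_shear (hF : ¬ IsSquare (-1 : F)) :
    IsRigidPair (similitudeGroup hF) (shear F) (LinearMap.inl F F F ∘ₗ LinearMap.fst F F F) := by
  rintro b ⟨x, y, s, -, hb⟩ b' ⟨x', y', s', hs', hb'⟩ hcomm hinvt
  have hxy := ne_zero_of_isUnit_similitudeMap (hb ▸ b.isUnit)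
  rw [hb, hb'] at hcomm
  refine ⟨x, hb.trans (similitudeMap_eq_smul_one_of_shear_comm hxy ?_ hcomm)⟩
  refine hinvt.imp (fun hrange => ?_) fun hker => ?_
  · obtain ⟨w, hw⟩ := hrange (LinearMap.mem_range_self _ (1, 0))
    rw [hb] at hw
    simpa [similitudeMap_apply] using (congrArg Prod.snd hw).symm
  · have hker : LinearMap.inl F F F (b'.1 (0, 1)).1 = 0 :=
      hker (show LinearMap.inl F F F 0 = 0 from map_zero _)
    have hs' : s' ≠ 0 := by
      rintro rfl
      simp at hs'
    rw [hb'] at hker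
    simpa [similitudeMap_apply, hs'] using hker

theorem hasTrivialConjInf_of_card_mod_four_eq_three {n : ℕ} (hn : 4 ≤ n) [Finite F]
    (hF : Nat.card F % 4 = 3) {H : Subgroup (GL (Fin n) F ⧸ Subgroup.center (GL (Fin n) F))}
    (hH : IsPGroup 2 H) : HasTrivialConjInf H := by
  cases nonempty_fintype F
  have hsq : ¬ IsSquare (-1 : F) := fun h =>
    FiniteField.isSquare_neg_one_iff.1 h (Nat.card_eq_fintype_card (α := F) ▸ hF)
  have hrigid := isRigidPair_similitudeGroup_shear hsq
  have hE : LinearMap.inl F F F ∘ₗ LinearMap.fst F F F ≠ 0 := fun h => by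
    simpa using LinearMap.congr_fun h (1, 0)
  obtain ⟨m, rfl | rfl⟩ := n.even_or_odd'
  · refine hasTrivialConjInf_of_isRigidPair (R := PUnit.{1}) (e := 0) (m := m) (by omega)
      (by simp [Module.finrank_zero_of_subsingleton, mul_comm]) (center_le_similitudeGroup hsq) ?_
      hrigid shear_injective hE (Function.injective_of_subsingleton _) hH
    rw [padicValNat_card_GL (by omega),
      sum_range_two_mul_padicValNat_pow_sub_one_of_mod_four_eq_three hF,
      card_similitudeGroup,
      Nat.card_unique (α := LinearMap.GeneralLinearGroup F PUnit.{1}), mul_one]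
  · refine hasTrivialConjInf_of_isRigidPair (m := m) (by omega) (by simp [mul_comm])
      (center_le_similitudeGroup hsq) ?_ hrigid shear_injective hE
      (LinearMap.inl_injective : Function.Injective (LinearMap.inl F F F)) hH
    rw [padicValNat_card_GL (by omega),
      sum_range_two_mul_add_one_padicValNat_pow_sub_one_of_mod_four_eq_three hF,
      card_similitudeGroup, card_generalLinearGroup_self]

end Similitude

theorem stmt12_general {n : ℕ} (hn : 4 ≤ n) {F : Type*} [Field F] [Finite F]
    {H : Subgroup (GL (Fin n) F ⧸ Subgroup.center (GL (Fin n) F))} (hH : IsPGroup 2 H) :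
    HasTrivialConjInf H := by
  by_cases hchar : ringChar F = 2
  · have : CharP F 2 := ringChar.of_eq hchar
    exact hasTrivialConjInf_of_charP hH
  · have hodd : Nat.card F % 2 = 1 := by
      cases nonempty_fintype F
      rw [Nat.card_eq_fintype_card]
      exact FiniteField.odd_card_of_char_ne_two hchar
    rcases (by omega : Nat.card F % 4 = 1 ∨ Nat.card F % 4 = 3) with hmod | hmod
    · exact hasTrivialConjInf_of_card_mod_four_eq_one (by omega) hmod hH
    · exact hasTrivialConjInf_of_card_mod_four_eq_three hn hmod hH

/-- Let `n ≥ 4` and let `q` be `9`, a Fermat prime, or a Mersenne prime. If `F` is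
the field with `q` elements and `H` is a Sylow `2`-subgroup of
`PGL_n(F) = GL_n(F)/Z(GL_n(F))`, then `H ∩ gHg⁻¹ = 1` for some `g`. -/
theorem stmt12 (n q : ℕ) (hn : 4 ≤ n)
    (hq : q = 9 ∨ (q.Prime ∧ ∃ k : ℕ, q = 2 ^ k + 1) ∨ (q.Prime ∧ ∃ k : ℕ, q = 2 ^ k - 1))
    (F : Type*) [Field F] [Fintype F] (hF : Fintype.card F = q)
    (H : Sylow 2 (Matrix.GeneralLinearGroup (Fin n) F ⧸
      Subgroup.center (Matrix.GeneralLinearGroup (Fin n) F))) :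
    ∃ g : Matrix.GeneralLinearGroup (Fin n) F ⧸
        Subgroup.center (Matrix.GeneralLinearGroup (Fin n) F),
      (H : Subgroup _) ⊓ (H : Subgroup _).map (MulAut.conj g).toMonoidHom = ⊥ :=
  stmt12_general hn H.isPGroup'
end
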